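/- arXiv:2006.14816 — 2 statements merged into one kernel-verified Lean document; each statement's English description precedes it below -/
import Mathlib

section
/- A right-continuous process M = (M_t)_{t ∈ ℝ₊} is a local martingale with respect to 𝔽 if and only if there exist a pair (F, H) satisfying Condition M and a random variable L′ satisfying E(|L′|·1_{γ≤t}) < ∞ for all t ∈ 𝒯 and E[L′ | γ] = 0 a.s., such that, up to P-indistinguishability, M_t = F(t)·1_{t<γ} + (H(γ) + L′)·1_{t≥γ}. -/
open MeasureTheory Filter Set Topology
open scoped ENNReal NNReal Classical

noncomputable section

namespace SingleJump

variable {Ω : Type*}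

/-- The event `{γ > t}`. -/
def jumpSet (γ : Ω → ℝ≥0∞) (t : ℝ≥0) : Set Ω := {ω | (t : ℝ≥0∞) < γ ω}

/-- The collection `𝒻_t` of the single jump filtration generated by `γ` and the σ-field `m`:
`A ∈ 𝒻_t` iff `A` is `m`-measurable and `A ∩ {γ > t}` is either `∅` or `{γ > t}`. -/
def jumpColl (m : MeasurableSpace Ω) (γ : Ω → ℝ≥0∞) (t : ℝ≥0) : Set (Set Ω) :=
  {A | MeasurableSet[m] A ∧ (A ∩ jumpSet γ t = ∅ ∨ A ∩ jumpSet γ t = jumpSet γ t)}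

/-- `𝒻_t` as a σ-field (the collection `jumpColl` generates itself, see Proposition 1(i)). -/
def jumpσ (m : MeasurableSpace Ω) (γ : Ω → ℝ≥0∞) (t : ℝ≥0) : MeasurableSpace Ω :=
  MeasurableSpace.generateFrom (jumpColl m γ t)

/-- `𝒻_∞ = σ(⋃_{t ∈ ℝ₊} 𝒻_t)`. -/
def jumpσInf (m : MeasurableSpace Ω) (γ : Ω → ℝ≥0∞) : MeasurableSpace Ω :=
  ⨆ t : ℝ≥0, jumpσ m γ t

/-- A real function on `ℝ≥0` is càdlàg: right-continuous everywhere, finite left limits. -/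
def Cadlag (f : ℝ≥0 → ℝ) : Prop :=
  (∀ t, ContinuousWithinAt f (Ici t) t) ∧
    ∀ t : ℝ≥0, 0 < t → ∃ c : ℝ, Tendsto f (𝓝[<] t) (𝓝 c)

/-- The filter of times `t ∈ ℝ≥0` with `t ↑ a` strictly from the left (this is `atTop`
when `a = ∞`). -/
def leftF (a : ℝ≥0∞) : Filter ℝ≥0 := Filter.comap (fun t : ℝ≥0 => (t : ℝ≥0∞)) (𝓝[<] a)

/-- Total variation of `f` over `[0,∞)`, including `|f 0|` (the paper's convention `Var`). -/
def totalVar (f : ℝ≥0 → ℝ) : ℝ≥0∞ := (‖f 0‖₊ : ℝ≥0∞) + eVariationOn f Set.univ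

/-- The process `M` stopped at the (possibly infinite) random time `T`. -/
def stopped (M : ℝ≥0 → Ω → ℝ) (T : Ω → ℝ≥0∞) : ℝ≥0 → Ω → ℝ :=
  fun t ω => M (((t : ℝ≥0∞) ⊓ T ω).toNNReal) ω

section WithMeasurableSpace

variable [m : MeasurableSpace Ω]

/-- `Ḡ(t) = 1 - G(t) = P(γ > t)`. -/
def Gbar (μ : Measure Ω) (γ : Ω → ℝ≥0∞) (t : ℝ≥0) : ℝ :=
  (μ {ω | (t : ℝ≥0∞) < γ ω}).toReal

/-- `Ḡ(t-) = P(γ ≥ t)`, the left-hand limit of `Ḡ` at `t`. -/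
def GbarLeft (μ : Measure Ω) (γ : Ω → ℝ≥0∞) (t : ℝ≥0) : ℝ :=
  (μ {ω | (t : ℝ≥0∞) ≤ γ ω}).toReal

/-- `t_G = sup {t ∈ ℝ₊ : G(t) < 1}`, the right endpoint of the law of `γ`. -/
def tG (μ : Measure Ω) (γ : Ω → ℝ≥0∞) : ℝ≥0∞ :=
  sSup ((fun t : ℝ≥0 => (t : ℝ≥0∞)) '' {t : ℝ≥0 | μ {ω | γ ω ≤ (t : ℝ≥0∞)} < 1})

/-- `𝒯 = {t ∈ ℝ₊ : P(γ ≥ t) > 0}`. -/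
def TT (μ : Measure Ω) (γ : Ω → ℝ≥0∞) : Set ℝ≥0 :=
  {t | 0 < μ {ω | (t : ℝ≥0∞) ≤ γ ω}}

/-- Case A: `P(γ = t_G < ∞) = 0`. -/
def CaseA (μ : Measure Ω) (γ : Ω → ℝ≥0∞) : Prop :=
  μ {ω | γ ω = tG μ γ ∧ tG μ γ < ⊤} = 0

/-- Case B: `P(γ = t_G < ∞) > 0`. -/
def CaseB (μ : Measure Ω) (γ : Ω → ℝ≥0∞) : Prop :=
  0 < μ {ω | γ ω = tG μ γ ∧ tG μ γ < ⊤}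

/-- `z ∈ L¹_loc(dG)` : `z` is Borel and `∫_{[0,t]} |z(s)| dG(s) < ∞` for every `t ∈ 𝒯`,
where `dG` is the law of `γ` (a measure on `[0,∞]`). -/
def MemL1loc (μ : Measure Ω) (γ : Ω → ℝ≥0∞) (z : ℝ≥0 → ℝ) : Prop :=
  Measurable z ∧ ∀ t ∈ TT μ γ,
    IntegrableOn (fun x : ℝ≥0∞ => z x.toNNReal) (Icc 0 (t : ℝ≥0∞)) (μ.map γ)

/-- `F loc≪ G` with density `z = dF/dG` : `F(t) = F(0) + ∫_(0,t] z(s) dG(s)` for `t < t_G`. -/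
def LocAC (μ : Measure Ω) (γ : Ω → ℝ≥0∞) (F z : ℝ≥0 → ℝ) : Prop :=
  MemL1loc μ γ z ∧ ∀ t : ℝ≥0, (t : ℝ≥0∞) < tG μ γ →
    F t = F 0 + ∫ x in Ioc (0 : ℝ≥0∞) (t : ℝ≥0∞), z x.toNNReal ∂(μ.map γ)

/-- Condition M for the pair `(F, H)`. -/
def CondM (μ : Measure Ω) (γ : Ω → ℝ≥0∞) (F H : ℝ≥0 → ℝ) : Prop :=
  (∃ z, LocAC μ γ F z) ∧ MemL1loc μ γ H ∧
  (∀ t : ℝ≥0, (t : ℝ≥0∞) < tG μ γ →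
    F t * Gbar μ γ t + ∫ x in Ioc (0 : ℝ≥0∞) (t : ℝ≥0∞), H x.toNNReal ∂(μ.map γ)
      = F 0 * Gbar μ γ 0) ∧
  (CaseB μ γ → Tendsto F (leftF (tG μ γ)) (𝓝 (H (tG μ γ).toNNReal)))

/-- A stopping time of the single jump filtration: `{T ≤ t} ∈ 𝒻_t` for all `t ∈ ℝ₊`. -/
def IsSJStoppingTime (γ : Ω → ℝ≥0∞) (T : Ω → ℝ≥0∞) : Prop :=
  ∀ t : ℝ≥0, {ω | T ω ≤ (t : ℝ≥0∞)} ∈ jumpColl m γ t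

/-- The martingale property on a set `S` of times, w.r.t. the single jump filtration. -/
def MartingaleOn (μ : Measure Ω) (γ : Ω → ℝ≥0∞) (M : ℝ≥0 → Ω → ℝ) (S : Set ℝ≥0) : Prop :=
  (∀ t ∈ S, Measurable[jumpσ m γ t] (M t)) ∧ (∀ t ∈ S, Integrable (M t) μ) ∧
    ∀ s ∈ S, ∀ t ∈ S, s ≤ t → μ[M t|jumpσ m γ s] =ᵐ[μ] M s

/-- A uniformly integrable martingale w.r.t. the single jump filtration. -/
def UIMartingale (μ : Measure Ω) (γ : Ω → ℝ≥0∞) (M : ℝ≥0 → Ω → ℝ) : Prop :=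
  MartingaleOn μ γ M Set.univ ∧ UniformIntegrable M 1 μ

/-- A local martingale w.r.t. the single jump filtration: adapted, a.s. càdlàg paths, and
there are stopping times `T n ↑ ∞` a.s. with each stopped process a UI martingale. -/
def LocalMartingale (μ : Measure Ω) (γ : Ω → ℝ≥0∞) (M : ℝ≥0 → Ω → ℝ) : Prop :=
  (∀ t : ℝ≥0, Measurable[jumpσ m γ t] (M t)) ∧
  (∀ᵐ ω ∂μ, Cadlag fun t => M t ω) ∧
  ∃ T : ℕ → Ω → ℝ≥0∞,
    (∀ n, IsSJStoppingTime γ (T n)) ∧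
    (∀ᵐ ω ∂μ, Monotone (fun n => T n ω) ∧ Tendsto (fun n => T n ω) atTop (𝓝 (⊤ : ℝ≥0∞))) ∧
    ∀ n, UIMartingale μ γ (stopped M (T n))

/-- `E[L' | γ] = 0` for a (possibly only locally integrable) random variable `L'`. -/
def CondZeroGivenGamma (μ : Measure Ω) (γ : Ω → ℝ≥0∞) (L' : Ω → ℝ) : Prop :=
  ∀ B : Set ℝ≥0∞, MeasurableSet B → IntegrableOn L' (γ ⁻¹' B) μ →
    ∫ ω in γ ⁻¹' B, L' ω ∂μ = 0

end WithMeasurableSpace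

/-!
An adapted process is deterministic before the jump, and a local martingale is frozen after it, so
a local martingale has the form `M_t = F(t) 1_{t < γ} + L 1_{t ≥ γ}`. The σ-field `𝒻_s` has the
atom `{γ > s}` and is everything off it, so for such a process the martingale property says exactly
that the mean of `M_t` over `{γ > 0}` does not depend on `t`: this is the balance equation
`F(t) Ḡ(t) + E(L 1_{0 < γ ≤ t}) = F(0) Ḡ(0)`, valid for all `t ∈ 𝒯`. Conversely, the balance
equation makes `M` a martingale up to any time of `𝒯`, and the stopping times equal to `τ` on
`{γ > τ}` and to `∞` elsewhere localize `M` as `τ ↑ sup 𝒯`.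

Replacing `L` by its regression `H(γ) = E[L | γ]` does not affect the balance equation, and
`L' = L - H(γ)` is centred given `γ`. For `L = H(γ)` the balance equation is Condition M: below
`t_G` they are the same equation, at an atom `t_G` the equation is the limit condition
`F(t_G-) = H(t_G)`, and absolute continuity of `F` is automatic, with `dF/dG = (F - H) / Ḡ(·-)` by
integration by parts.
-/

/-! ### Integration by parts and the balance equation -/

section Stieltjes

variable {α : Type*} [LinearOrder α] [TopologicalSpace α] [OrderClosedTopology α]
  [MeasurableSpace α] [OpensMeasurableSpace α]

lemma restrict_Ioc_restrict_Iic (ν : Measure α) (a : α) {b x : α} (hx : x ≤ b) :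
    (ν.restrict (Ioc a b)).restrict (Iic x) = ν.restrict (Ioc a x) := by
  rw [Measure.restrict_restrict measurableSet_Iic, inter_comm, Ioc_inter_Iic, min_eq_right hx]

lemma setIntegral_Iio_eq_sub {ρ : Measure α} {u : α → ℝ} (hu : Integrable u ρ) (x : α) :
    ∫ y in Iio x, u y ∂ρ = ∫ y in Iic x, u y ∂ρ - ρ.real {x} * u x := by
  rw [← Iio_union_right, setIntegral_union (by simp) (measurableSet_singleton x)
    hu.integrableOn hu.integrableOn, integral_singleton, smul_eq_mul, add_sub_cancel_right]

lemma integral_indicator_le_mul (ρ : Measure α) (u v : α → ℝ) (y : α) :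
    ∫ x, {p : α × α | p.1 ≤ p.2}.indicator (fun p => u p.1 * v p.2) (x, y) ∂ρ
      = v y * ∫ x in Iic y, u x ∂ρ := by
  rw [← integral_const_mul, ← integral_indicator measurableSet_Iic]
  exact integral_congr_ae (.of_forall fun x => by simp [indicator, mul_comm])

lemma integral_indicator_compl_le_mul (ρ : Measure α) (u v : α → ℝ) (x : α) :
    ∫ y, {p : α × α | p.1 ≤ p.2}ᶜ.indicator (fun p => u p.1 * v p.2) (x, y) ∂ρ
      = u x * ∫ y in Iio x, v y ∂ρ := by
  rw [← integral_const_mul, ← integral_indicator measurableSet_Iio]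
  exact integral_congr_ae (.of_forall fun y => by simp [indicator])

lemma measureReal_Ioi_eq_Ioc_add_Ioi (ν : Measure α) [IsFiniteMeasure ν] {a b : α} (hab : a ≤ b) :
    ν.real (Ioi a) = ν.real (Ioc a b) + ν.real (Ioi b) := by
  rw [← Ioc_union_Ioi_eq_Ioi hab, measureReal_union (by simp) measurableSet_Ioi]

lemma measureReal_Ioi_eq_Ioo_add_Ici (ν : Measure α) [IsFiniteMeasure ν] {a b : α} (hab : a < b) :
    ν.real (Ioi a) = ν.real (Ioo a b) + ν.real (Ici b) := by
  rw [← Ioo_union_Ici_eq_Ioi hab, measureReal_union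
    (disjoint_left.2 fun _ hx hx' => hx.2.not_ge hx') measurableSet_Ici]

variable [SecondCountableTopology α]

lemma integrable_indicator_le_mul {ρ : Measure α} [SFinite ρ] {u v : α → ℝ}
    (hu : Integrable u ρ) (hv : Integrable v ρ) :
    Integrable ({p : α × α | p.1 ≤ p.2}.indicator fun p => u p.1 * v p.2) (ρ.prod ρ) :=
  (hu.mul_prod hv).indicator measurableSet_le'

lemma integrable_mul_setIntegral_Iic {ρ : Measure α} [SFinite ρ] {u v : α → ℝ}
    (hu : Integrable u ρ) (hv : Integrable v ρ) :
    Integrable (fun y => v y * ∫ x in Iic y, u x ∂ρ) ρ := by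
  simpa only [integral_indicator_le_mul]
    using (integrable_indicator_le_mul hu hv).integral_prod_right

lemma integral_mul_integral_eq_add {ρ : Measure α} [SFinite ρ] {u v : α → ℝ}
    (hu : Integrable u ρ) (hv : Integrable v ρ) :
    (∫ x, u x ∂ρ) * ∫ y, v y ∂ρ
      = ∫ x, u x * (∫ y in Iio x, v y ∂ρ) ∂ρ + ∫ y, v y * (∫ x in Iic y, u x ∂ρ) ∂ρ := by
  have hK : MeasurableSet {p : α × α | p.1 ≤ p.2} := measurableSet_le'
  rw [← integral_prod_mul, ← integral_add_compl hK (hu.mul_prod hv), ← integral_indicator hK,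
    ← integral_indicator hK.compl, integral_prod_symm _ (integrable_indicator_le_mul hu hv),
    integral_prod _ ((hu.mul_prod hv).indicator hK.compl), add_comm]
  simp only [integral_indicator_le_mul, integral_indicator_compl_le_mul]

/- Writing `I x = ∫_{y ≤ x} u`, integration by parts gives `(∫ u)² = ∫ u (I(x-) + I(x)) dρ`, and
`u I(x-) = u I(x) - ρ{x} u² ≤ 0`. -/
lemma integral_eq_zero_of_mul_setIntegral_Iic_nonpos {ρ : Measure α} [SFinite ρ] {u : α → ℝ}
    (hu : Integrable u ρ) (h : ∀ᵐ x ∂ρ, u x * ∫ y in Iic x, u y ∂ρ ≤ 0) :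
    ∫ x, u x ∂ρ = 0 := by
  have h_left : ∫ x, u x * (∫ y in Iio x, u y ∂ρ) ∂ρ ≤ 0 := by
    refine integral_nonpos_of_ae (h.mono fun x hx => ?_)
    have h_atom : 0 ≤ ρ.real {x} * (u x * u x) :=
      mul_nonneg measureReal_nonneg (mul_self_nonneg _)
    calc u x * ∫ y in Iio x, u y ∂ρ
        = u x * ∫ y in Iic x, u y ∂ρ - ρ.real {x} * (u x * u x) := by
          rw [setIntegral_Iio_eq_sub hu]; ring
      _ ≤ 0 := by linarith
  have h_right : ∫ x, u x * (∫ y in Iic x, u y ∂ρ) ∂ρ ≤ 0 := integral_nonpos_of_ae h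
  have h_parts := integral_mul_integral_eq_add hu hu
  exact mul_self_eq_zero.1 (le_antisymm (by linarith) (mul_self_nonneg _))

variable {ν : Measure α} [IsFiniteMeasure ν] {f g h : α → ℝ} {a b : α}

lemma integrableOn_setIntegral_Ioc (hg : IntegrableOn g (Ioc a b) ν) :
    IntegrableOn (fun x => ∫ y in Ioc a x, g y ∂ν) (Ioc a b) ν := by
  refine IntegrableOn.congr_fun
    (integrable_mul_setIntegral_Iic hg (integrable_const (1 : ℝ))) (fun x hx => ?_)
    measurableSet_Ioc
  simp only [one_mul, restrict_Ioc_restrict_Iic ν a hx.2]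

lemma setIntegral_Ioc_mul_measureReal_Ioi (hab : a ≤ b) (hg : IntegrableOn g (Ioc a b) ν)
    (hg_tail : IntegrableOn (fun x => g x * ν.real (Ici x)) (Ioc a b) ν) :
    (∫ x in Ioc a b, g x ∂ν) * ν.real (Ioi b)
      = ∫ x in Ioc a b, g x * ν.real (Ici x) ∂ν
        - ∫ x in Ioc a b, (∫ y in Ioc a x, g y ∂ν) ∂ν := by
  have h_inter : ∀ x ∈ Ioc a b, Iio x ∩ Ioc a b = Ioo a x := fun x hx => by
    ext y; exact ⟨fun hy => ⟨hy.2.1, hy.1⟩, fun hy => ⟨hy.2, hy.1, hy.2.le.trans hx.2⟩⟩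
  have h_Iio : ∀ x ∈ Ioc a b, g x * (∫ _ in Iio x, (1 : ℝ) ∂ν.restrict (Ioc a b))
      = g x * ν.real (Ioi a) - g x * ν.real (Ici x) := fun x hx => by
    rw [setIntegral_const, measureReal_restrict_apply measurableSet_Iio, h_inter x hx,
      measureReal_Ioi_eq_Ioo_add_Ici ν hx.1, smul_eq_mul]
    ring
  have h_Iic : ∀ x ∈ Ioc a b, 1 * (∫ y in Iic x, g y ∂ν.restrict (Ioc a b))
      = ∫ y in Ioc a x, g y ∂ν := fun x hx => by
    rw [one_mul, restrict_Ioc_restrict_Iic ν a hx.2]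
  have h_parts := integral_mul_integral_eq_add hg (integrable_const (1 : ℝ))
  rw [setIntegral_congr_fun measurableSet_Ioc h_Iio, setIntegral_congr_fun measurableSet_Ioc h_Iic,
    integral_sub (hg.mul_const _) hg_tail, integral_mul_const, setIntegral_const, smul_eq_mul,
    mul_one, measureReal_Ioi_eq_Ioc_add_Ioi ν hab] at h_parts
  linarith

lemma sub_setIntegral_mul_measureReal_Ioi (hab : a ≤ b) (hf : IntegrableOn f (Ioc a b) ν)
    (hh : IntegrableOn h (Ioc a b) ν) (hg : IntegrableOn g (Ioc a b) ν)
    (h_dens : EqOn (fun x => g x * ν.real (Ici x)) (fun x => f x - h x) (Ioc a b))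
    (h_bal : f b * ν.real (Ioi b) + ∫ x in Ioc a b, h x ∂ν = f a * ν.real (Ioi a)) :
    (f b - f a - ∫ x in Ioc a b, g x ∂ν) * ν.real (Ioi b)
      = -∫ x in Ioc a b, (f x - f a - ∫ y in Ioc a x, g y ∂ν) ∂ν := by
  have h_prod := setIntegral_Ioc_mul_measureReal_Ioi hab hg
    ((hf.sub hh).congr_fun h_dens.symm measurableSet_Ioc)
  rw [setIntegral_congr_fun measurableSet_Ioc h_dens, integral_sub hf hh] at h_prod
  have h_const : IntegrableOn (fun _ => f a) (Ioc a b) ν := integrable_const _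
  have hf_sub : IntegrableOn (fun x => f x - f a) (Ioc a b) ν := hf.sub h_const
  rw [integral_sub hf_sub (integrableOn_setIntegral_Ioc hg),
    integral_sub hf h_const, setIntegral_const, smul_eq_mul]
  rw [measureReal_Ioi_eq_Ioc_add_Ioi ν hab] at h_bal
  linarith

lemma eq_add_setIntegral_of_balance (hab : a ≤ b) (hf : IntegrableOn f (Ioc a b) ν)
    (hh : IntegrableOn h (Ioc a b) ν) (hg : IntegrableOn g (Ioc a b) ν)
    (h_dens : EqOn (fun x => g x * ν.real (Ici x)) (fun x => f x - h x) (Ioc a b))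
    (h_bal : ∀ s ∈ Icc a b, f s * ν.real (Ioi s) + ∫ x in Ioc a s, h x ∂ν
      = f a * ν.real (Ioi a))
    (hb : ν.real (Ioi b) ≠ 0) :
    f b = f a + ∫ x in Ioc a b, g x ∂ν := by
  set D : α → ℝ := fun x => f x - f a - ∫ y in Ioc a x, g y ∂ν
  have hD : IntegrableOn D (Ioc a b) ν :=
    (hf.sub (integrable_const _)).sub (integrableOn_setIntegral_Ioc hg)
  have hD_bal : ∀ s ∈ Icc a b, D s * ν.real (Ioi s) = -∫ x in Ioc a s, D x ∂ν := fun s hs => by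
    have h_sub : Ioc a s ⊆ Ioc a b := Ioc_subset_Ioc_right hs.2
    exact sub_setIntegral_mul_measureReal_Ioi hs.1 (hf.mono_set h_sub) (hh.mono_set h_sub)
      (hg.mono_set h_sub) (h_dens.mono h_sub) (h_bal s hs)
  have hD_zero : ∫ x in Ioc a b, D x ∂ν = 0 := by
    refine integral_eq_zero_of_mul_setIntegral_Iic_nonpos hD
      (ae_restrict_of_forall_mem measurableSet_Ioc fun s hs => ?_)
    calc D s * ∫ y in Iic s, D y ∂ν.restrict (Ioc a b)
        = -(D s * D s * ν.real (Ioi s)) := by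
          rw [restrict_Ioc_restrict_Iic ν a hs.2, ← neg_neg (∫ y in Ioc a s, D y ∂ν),
            ← hD_bal s (Ioc_subset_Icc_self hs)]
          ring
      _ ≤ 0 := neg_nonpos.2 (mul_nonneg (mul_self_nonneg _) measureReal_nonneg)
  have hDb : D b = 0 := by
    have h_end := hD_bal b (right_mem_Icc.2 hab)
    rw [hD_zero, neg_zero] at h_end
    exact (mul_eq_zero.1 h_end).resolve_right hb
  linarith

lemma measurable_setIntegral_Ioc (ν : Measure α) [SFinite ν] (hg : Measurable g) (a : α) :
    Measurable fun x => ∫ y in Ioc a x, g y ∂ν := by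
  have h_ind : StronglyMeasurable
      (Function.uncurry fun x y => (Ioc a x).indicator g y) := by
    have h_set : MeasurableSet {p : α × α | p.2 ∈ Ioc a p.1} :=
      (measurableSet_lt measurable_const measurable_snd).inter
        (measurableSet_le measurable_snd measurable_fst)
    exact ((hg.comp measurable_snd).indicator h_set).stronglyMeasurable
  simpa only [integral_indicator measurableSet_Ioc]
    using (h_ind.integral_prod_right (ν := ν)).measurable

end Stieltjes

section Tail

variable {α : Type*} [LinearOrder α] [MeasurableSpace α]

lemma antitone_measureReal_Ioi (ν : Measure α) [IsFiniteMeasure ν] :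
    Antitone fun x => ν.real (Ioi x) := fun _ _ hxy => measureReal_mono (Ioi_subset_Ioi hxy)

lemma antitone_measureReal_Ici (ν : Measure α) [IsFiniteMeasure ν] :
    Antitone fun x => ν.real (Ici x) := fun _ _ hxy => measureReal_mono (Ici_subset_Ici.2 hxy)

lemma integrableOn_div_of_inv_le {β : Type*} [MeasurableSpace β] {ν : Measure β} {g w : β → ℝ}
    {c : ℝ} {S : Set β} (hS : MeasurableSet S) (hg : IntegrableOn g S ν) (hw : Measurable w)
    (hw_nonneg : 0 ≤ w) (hc : ∀ x ∈ S, (w x)⁻¹ ≤ c) :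
    IntegrableOn (fun x => g x / w x) S ν := by
  simp only [div_eq_mul_inv]
  refine hg.mul_bdd (c := c) hw.inv.aestronglyMeasurable
    (ae_restrict_of_forall_mem hS fun x hx => ?_)
  rw [Real.norm_of_nonneg (inv_nonneg.2 (hw_nonneg x))]
  exact hc x hx

variable [TopologicalSpace α] [OrderTopology α] [BorelSpace α]
  {ν : Measure α} [IsFiniteMeasure ν] {g : α → ℝ} {b : α} {S : Set α}

lemma integrableOn_div_measureReal_Ici (hS : MeasurableSet S) (hSb : S ⊆ Iic b)
    (hb : 0 < ν.real (Ici b)) (hg : IntegrableOn g S ν) :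
    IntegrableOn (fun x => g x / ν.real (Ici x)) S ν :=
  integrableOn_div_of_inv_le hS hg (antitone_measureReal_Ici ν).measurable
    (fun _ => measureReal_nonneg) fun _ hx => inv_anti₀ hb (antitone_measureReal_Ici ν (hSb hx))

/- At an atom `b` with `ν (b, ∞) = 0` the quotient is `0` by the convention `x / 0 = 0`; below `b`
the tail is at least `ν [b, ∞)`. -/
lemma integrableOn_div_measureReal_Ioi (hS : MeasurableSet S) (hSb : S ⊆ Iic b)
    (hb : 0 < ν.real (Ici b)) (hg : IntegrableOn g S ν) :
    IntegrableOn (fun x => g x / ν.real (Ioi x)) S ν := by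
  refine integrableOn_div_of_inv_le hS hg (antitone_measureReal_Ioi ν).measurable
    (fun _ => measureReal_nonneg) (c := (ν.real (Ici b))⁻¹ + (ν.real (Ioi b))⁻¹) fun x hx => ?_
  have h_nonneg : ∀ s, 0 ≤ (ν.real s)⁻¹ := fun s => inv_nonneg.2 measureReal_nonneg
  rcases (hSb hx).lt_or_eq with hlt | rfl
  · exact (inv_anti₀ hb (measureReal_mono (Ici_subset_Ioi.2 hlt))).trans
      (le_add_of_nonneg_right (h_nonneg _))
  · exact le_add_of_nonneg_left (h_nonneg _)

end Tail

lemma tendsto_setIntegral_preimage_Ioc_nhdsLT [MeasurableSpace Ω] {α : Type*} [LinearOrder α]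
    [TopologicalSpace α] [OrderTopology α] [FirstCountableTopology α] [MeasurableSpace α]
    [OpensMeasurableSpace α] {μ : Measure Ω} {X : Ω → α} (hX : Measurable X) {g : Ω → ℝ} {a b : α}
    (hg : IntegrableOn g (X ⁻¹' Ioo a b) μ) :
    Tendsto (fun u => ∫ ω in X ⁻¹' Ioc a u, g ω ∂μ) (𝓝[<] b)
      (𝓝 (∫ ω in X ⁻¹' Ioo a b, g ω ∂μ)) := by
  have h_sub : ∀ᶠ u in 𝓝[<] b, X ⁻¹' Ioc a u ⊆ X ⁻¹' Ioo a b :=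
    eventually_mem_nhdsWithin.mono fun u hu => preimage_mono (Ioc_subset_Ioo_right hu)
  simp only [← integral_indicator (hX measurableSet_Ioc),
    ← integral_indicator (hX measurableSet_Ioo)]
  refine tendsto_integral_filter_of_dominated_convergence
    (fun ω => ‖(X ⁻¹' Ioo a b).indicator g ω‖) ?_ ?_ ?_ (.of_forall fun ω => ?_)
  · exact h_sub.mono fun u hu =>
      ((hg.mono_set hu).integrable_indicator (hX measurableSet_Ioc)).aestronglyMeasurable
  · exact h_sub.mono fun u hu =>
      .of_forall fun ω => norm_indicator_le_of_subset hu g ω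
  · exact (hg.integrable_indicator (hX measurableSet_Ioo)).norm
  · refine tendsto_const_nhds.congr' ?_
    by_cases hω : X ω < b
    · filter_upwards [Ico_mem_nhdsLT hω] with u hu
      simp only [indicator, mem_preimage, mem_Ioo, mem_Ioc, hω, hu.1, and_true]
    · filter_upwards [self_mem_nhdsWithin] with u hu
      simp only [indicator, mem_preimage, mem_Ioo, mem_Ioc, hω, and_false,
        (hu.trans_le (not_lt.1 hω)).not_ge]

section Balance

variable {α : Type*} [LinearOrder α] [MeasurableSpace α]

/-- The solution `f` of the balance equation `f(x) ν(x,∞) + ∫_{(a,x]} h dν = C`, wherever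
`ν(x,∞) ≠ 0`. -/
def balanceSolution (ν : Measure α) (a : α) (C : ℝ) (h : α → ℝ) (x : α) : ℝ :=
  (C - ∫ y in Ioc a x, h y ∂ν) / ν.real (Ioi x)

/-- The density `(f(x) - h(x)) / ν[x,∞)` with respect to `ν` of the solution `f` of the balance
equation, read off from `d(f · ν(·,∞)) = ν[·,∞) df - f dν = -h dν`. -/
def balanceDensity (ν : Measure α) (a : α) (C : ℝ) (h : α → ℝ) (x : α) : ℝ :=
  (balanceSolution ν a C h x - h x) / ν.real (Ici x)

variable [TopologicalSpace α] [OrderTopology α] [SecondCountableTopology α] [BorelSpace α]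
  {ν : Measure α} [IsFiniteMeasure ν] {h : α → ℝ} {a b : α}

lemma measurable_balanceDensity (ν : Measure α) [IsFiniteMeasure ν] (a : α) (C : ℝ)
    (hh : Measurable h) : Measurable (balanceDensity ν a C h) :=
  (((measurable_const.sub (measurable_setIntegral_Ioc ν hh a)).div
    (antitone_measureReal_Ioi ν).measurable).sub hh).div (antitone_measureReal_Ici ν).measurable

lemma integrableOn_balanceSolution (C : ℝ) (hh : IntegrableOn h (Ioc a b) ν)
    (hb : 0 < ν.real (Ici b)) : IntegrableOn (balanceSolution ν a C h) (Icc a b) ν := by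
  refine integrableOn_div_measureReal_Ioi measurableSet_Icc Icc_subset_Iic_self hb
    ((integrable_const C).sub ?_)
  exact (integrableOn_Icc_iff_integrableOn_Ioc' (by finiteness)).2
    (integrableOn_setIntegral_Ioc hh)

lemma integrableOn_balanceDensity (C : ℝ) (hh : IntegrableOn h (Icc a b) ν)
    (hb : 0 < ν.real (Ici b)) : IntegrableOn (balanceDensity ν a C h) (Icc a b) ν :=
  integrableOn_div_measureReal_Ici measurableSet_Icc Icc_subset_Iic_self hb
    ((integrableOn_balanceSolution C (hh.mono_set Ioc_subset_Icc_self) hb).sub hh)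

lemma balanceSolution_eq_add_setIntegral (C : ℝ) (hab : a ≤ b) (hh : IntegrableOn h (Icc a b) ν)
    (hb : 0 < ν.real (Ioi b)) :
    balanceSolution ν a C h b
      = balanceSolution ν a C h a + ∫ x in Ioc a b, balanceDensity ν a C h x ∂ν := by
  have hb' : 0 < ν.real (Ici b) := hb.trans_le (measureReal_mono Ioi_subset_Ici_self)
  have h_tail : ∀ s ≤ b, ν.real (Ioi s) ≠ 0 := fun s hs =>
    (hb.trans_le (antitone_measureReal_Ioi ν hs)).ne'
  have hh_Ioc := hh.mono_set Ioc_subset_Icc_self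
  refine eq_add_setIntegral_of_balance (h := h) hab
    ((integrableOn_balanceSolution C hh_Ioc hb').mono_set Ioc_subset_Icc_self) hh_Ioc
    ((integrableOn_balanceDensity C hh hb').mono_set Ioc_subset_Icc_self)
    (fun x hx => div_mul_cancel₀ _ (hb'.trans_le (antitone_measureReal_Ici ν hx.2)).ne')
    (fun s hs => ?_) (h_tail b le_rfl)
  rw [balanceSolution, balanceSolution, div_mul_cancel₀ _ (h_tail s hs.2),
    div_mul_cancel₀ _ (h_tail a hab), Ioc_self, setIntegral_empty]
  ring

lemma tendsto_measureReal_Ioi_nhdsLT (ν : Measure α) [IsFiniteMeasure ν] (hab : a < b) :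
    Tendsto (fun u => ν.real (Ioi u)) (𝓝[<] b) (𝓝 (ν.real (Ici b))) := by
  have h_lim := tendsto_setIntegral_preimage_Ioc_nhdsLT (μ := ν) (a := a) (b := b) measurable_id
    (integrable_const (1 : ℝ))
  simp only [preimage_id, setIntegral_const, smul_eq_mul, mul_one] at h_lim
  have h_eq : ν.real (Ici b) = ν.real (Ioi a) - ν.real (Ioo a b) := by
    rw [measureReal_Ioi_eq_Ioo_add_Ici ν hab, add_sub_cancel_left]
  rw [h_eq]
  refine (h_lim.const_sub (ν.real (Ioi a))).congr' ?_
  filter_upwards [Ico_mem_nhdsLT hab] with u hu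
  rw [measureReal_Ioi_eq_Ioc_add_Ioi ν hu.1, add_sub_cancel_left]

end Balance

/-! ### The single jump filtration -/

section Filtration

lemma jumpSet_anti (γ : Ω → ℝ≥0∞) : Antitone (jumpSet γ) :=
  fun _ _ hst _ hω => (ENNReal.coe_le_coe.2 hst).trans_lt hω

variable [m : MeasurableSpace Ω] {γ : Ω → ℝ≥0∞} {t : ℝ≥0}

lemma mem_jumpColl_iff {A : Set Ω} :
    A ∈ jumpColl m γ t ↔ MeasurableSet A ∧ (Disjoint A (jumpSet γ t) ∨ jumpSet γ t ⊆ A) := by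
  rw [jumpColl, mem_ofPred_eq, disjoint_iff_inter_eq_empty, inter_eq_right]

lemma measurableSet_jumpσ_iff {A : Set Ω} :
    MeasurableSet[jumpσ m γ t] A ↔ A ∈ jumpColl m γ t := by
  refine ⟨fun hA => ?_, MeasurableSpace.measurableSet_generateFrom⟩
  induction A, hA using MeasurableSpace.generateFrom_induction with
  | hC _ hA => exact hA
  | empty => exact mem_jumpColl_iff.2 ⟨.empty, .inl (empty_disjoint _)⟩
  | compl A _ ih =>
    rw [mem_jumpColl_iff] at ih ⊢
    exact ⟨ih.1.compl, ih.2.symm.imp disjoint_compl_left_iff_subset.2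
      fun h => subset_compl_iff_disjoint_left.2 h⟩
  | iUnion f _ ih =>
    simp only [mem_jumpColl_iff] at ih ⊢
    refine ⟨.iUnion fun n => (ih n).1, ?_⟩
    by_cases h : ∃ n, jumpSet γ t ⊆ f n
    · exact .inr (subset_iUnion_of_subset h.choose h.choose_spec)
    · exact .inl (disjoint_iUnion_left.2 fun n => (ih n).2.resolve_right (not_exists.1 h n))

lemma jumpσ_le (γ : Ω → ℝ≥0∞) (t : ℝ≥0) : jumpσ m γ t ≤ m :=
  fun _ hA => (mem_jumpColl_iff.1 (measurableSet_jumpσ_iff.1 hA)).1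

lemma jumpσ_mono (γ : Ω → ℝ≥0∞) : Monotone (jumpσ m γ) := by
  intro s t hst A hA
  rw [measurableSet_jumpσ_iff, mem_jumpColl_iff] at hA ⊢
  exact ⟨hA.1, hA.2.imp (·.mono_right (jumpSet_anti γ hst)) (jumpSet_anti γ hst).trans⟩

lemma eq_of_mem_jumpSet {β : Type*} [MeasurableSpace β] [MeasurableSingletonClass β] {f : Ω → β}
    (hf : Measurable[jumpσ m γ t] f) {ω ω' : Ω} (hω : ω ∈ jumpSet γ t) (hω' : ω' ∈ jumpSet γ t) :
    f ω = f ω' := by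
  have hA := measurableSet_jumpσ_iff.1 (hf (measurableSet_singleton (f ω)))
  rcases (mem_jumpColl_iff.1 hA).2 with h_disj | h_sub
  · exact absurd hω (disjoint_left.1 h_disj rfl)
  · exact (h_sub hω').symm

lemma exists_eq_of_lt {M : ℝ≥0 → Ω → ℝ} (hM : ∀ t, Measurable[jumpσ m γ t] (M t)) :
    ∃ F : ℝ≥0 → ℝ, ∀ (t : ℝ≥0) (ω : Ω), (t : ℝ≥0∞) < γ ω → M t ω = F t := by
  suffices ∀ t : ℝ≥0, ∃ c, ∀ ω, (t : ℝ≥0∞) < γ ω → M t ω = c from Classical.skolem.1 this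
  intro t
  rcases (jumpSet γ t).eq_empty_or_nonempty with h_empty | ⟨ω', hω'⟩
  · exact ⟨0, fun ω hω => absurd hω (h_empty ▸ notMem_empty ω : ω ∉ jumpSet γ t)⟩
  · exact ⟨M t ω', fun ω hω => eq_of_mem_jumpSet (hM t) hω hω'⟩

lemma measurableSet_jumpSet (hγ : Measurable γ) (t : ℝ≥0) :
    MeasurableSet[jumpσ m γ t] (jumpSet γ t) :=
  measurableSet_jumpσ_iff.2 (mem_jumpColl_iff.2 ⟨hγ measurableSet_Ioi, .inr Subset.rfl⟩)

lemma setIntegral_eq_of_measurableSet_jumpσ {μ : Measure Ω} {f g : Ω → ℝ} (hγ : Measurable γ)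
    (hf : Integrable f μ) (hg : Integrable g μ)
    (h_before : ∫ ω in jumpSet γ t, f ω ∂μ = ∫ ω in jumpSet γ t, g ω ∂μ)
    (h_after : ∀ᵐ ω ∂μ, γ ω ≤ t → f ω = g ω) {A : Set Ω} (hA : MeasurableSet[jumpσ m γ t] A) :
    ∫ ω in A, f ω ∂μ = ∫ ω in A, g ω ∂μ := by
  have h_off : ∀ B : Set Ω, MeasurableSet B → Disjoint B (jumpSet γ t) →
      ∫ ω in B, f ω ∂μ = ∫ ω in B, g ω ∂μ := fun B hB h_disj =>
    setIntegral_congr_ae hB (h_after.mono fun ω h hω => h (not_lt.1 (disjoint_left.1 h_disj hω)))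
  have hJ : MeasurableSet (jumpSet γ t) := hγ measurableSet_Ioi
  obtain ⟨hA_meas, h_disj | h_sub⟩ := mem_jumpColl_iff.1 (measurableSet_jumpσ_iff.1 hA)
  · exact h_off A hA_meas h_disj
  · rw [← sdiff_union_of_subset h_sub,
      setIntegral_union disjoint_sdiff_left hJ hf.integrableOn hf.integrableOn,
      setIntegral_union disjoint_sdiff_left hJ hg.integrableOn hg.integrableOn, h_before,
      h_off _ (hA_meas.diff hJ) disjoint_sdiff_left]

lemma UIMartingale.of_ae_eq_condExp {μ : Measure Ω} [IsFiniteMeasure μ] {X : ℝ≥0 → Ω → ℝ}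
    {Y : Ω → ℝ} (hX : ∀ t, Measurable[jumpσ m γ t] (X t)) (hY : Integrable Y μ)
    (hXY : ∀ t, X t =ᵐ[μ] μ[Y | jumpσ m γ t]) : UIMartingale μ γ X := by
  refine ⟨⟨fun t _ => hX t, fun t _ => integrable_condExp.congr (hXY t).symm,
      fun s _ t _ hst => ?_⟩,
    (hY.uniformIntegrable_condExp fun t => jumpσ_le γ t).ae_eq fun t => (hXY t).symm⟩
  calc μ[X t | jumpσ m γ s] =ᵐ[μ] μ[μ[Y | jumpσ m γ t] | jumpσ m γ s] := condExp_congr_ae (hXY t)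
    _ =ᵐ[μ] μ[Y | jumpσ m γ s] := condExp_condExp_of_le (jumpσ_mono γ hst) (jumpσ_le γ t)
    _ =ᵐ[μ] X s := (hXY s).symm

lemma IsSJStoppingTime.le_of_lt {T : Ω → ℝ≥0∞} (hT : IsSJStoppingTime γ T) {ω ω' : Ω}
    (hω : T ω < γ ω) (hω' : T ω < γ ω') : T ω' ≤ T ω := by
  lift T ω to ℝ≥0 using (hω.trans_le le_top).ne with t ht
  have h_sub := ((mem_jumpColl_iff.1 (hT t)).2.resolve_left fun h_disj =>
    disjoint_left.1 h_disj ht.ge hω)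
  exact h_sub hω'

end Filtration

/-! ### The time set `𝒯` -/

section TimeSet

variable [MeasurableSpace Ω]

lemma isLowerSet_TT (μ : Measure Ω) (γ : Ω → ℝ≥0∞) : IsLowerSet (TT μ γ) :=
  fun _ _ hst ht => ht.trans_le <| measure_mono fun _ hω => (ENNReal.coe_le_coe.2 hst).trans hω

lemma zero_mem_TT (μ : Measure Ω) [NeZero μ] (γ : Ω → ℝ≥0∞) : 0 ∈ TT μ γ := by
  simp [TT, pos_iff_ne_zero, NeZero.ne μ]

lemma exists_monotone_seq_cofinal_TT (μ : Measure Ω) [NeZero μ] (γ : Ω → ℝ≥0∞) :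
    ∃ τ : ℕ → ℝ≥0, Monotone τ ∧ (∀ n, τ n ∈ TT μ γ) ∧ ∀ t ∈ TT μ γ, ∀ᶠ n in atTop, t ≤ τ n := by
  have : Nonempty (TT μ γ) := ⟨0, zero_mem_TT μ γ⟩
  have : OrdConnected (TT μ γ) := (isLowerSet_TT μ γ).ordConnected
  obtain ⟨τ, hτ_mono, hτ_top⟩ := exists_seq_monotone_tendsto_atTop_atTop (TT μ γ)
  exact ⟨fun n => τ n, hτ_mono, fun n => (τ n).2,
    fun t ht => tendsto_atTop.1 hτ_top ⟨t, ht⟩⟩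

lemma ae_forall_le_mem_TT (μ : Measure Ω) (γ : Ω → ℝ≥0∞) :
    ∀ᵐ ω ∂μ, ∀ t : ℝ≥0, (t : ℝ≥0∞) ≤ γ ω → t ∈ TT μ γ := by
  have : OrdConnected (TT μ γ)ᶜ := (isLowerSet_TT μ γ).compl.ordConnected
  rcases isEmpty_or_nonempty ((TT μ γ)ᶜ : Set ℝ≥0) with h_empty | h_nonempty
  · exact .of_forall fun _ t _ => not_not.1 fun ht => h_empty.false ⟨t, ht⟩
  obtain ⟨u, -, hu⟩ := exists_seq_antitone_tendsto_atTop_atBot ((TT μ γ)ᶜ : Set ℝ≥0)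
  have h_null : ∀ n, ∀ᵐ ω ∂μ, γ ω < u n := fun n => by
    have h_notMem : ¬ 0 < μ {ω | (u n : ℝ≥0∞) ≤ γ ω} := (u n).2
    simpa only [ae_iff, not_lt] using nonpos_iff_eq_zero.1 (not_lt.1 h_notMem)
  filter_upwards [ae_all_iff.2 h_null] with ω hω t ht
  by_contra ht_mem
  obtain ⟨n, hn⟩ := (tendsto_atBot.1 hu ⟨t, ht_mem⟩).exists
  exact (hω n).not_ge ((ENNReal.coe_le_coe.2 hn).trans ht)

end TimeSet

/-! ### Condition M -/

section Endpoint

variable [MeasurableSpace Ω] {μ : Measure Ω} {γ : Ω → ℝ≥0∞} {t : ℝ≥0}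

lemma coe_lt_tG_iff [IsProbabilityMeasure μ] (hγ : Measurable γ) :
    (t : ℝ≥0∞) < tG μ γ ↔ 0 < μ {ω | (t : ℝ≥0∞) < γ ω} := by
  have h_compl : ∀ s : ℝ≥0, μ {ω | γ ω ≤ (s : ℝ≥0∞)} < 1 ↔ 0 < μ {ω | (s : ℝ≥0∞) < γ ω} :=
    fun s => by
      have h_meas : MeasurableSet {ω | γ ω ≤ (s : ℝ≥0∞)} := hγ measurableSet_Iic
      have h_eq : {ω | (s : ℝ≥0∞) < γ ω} = {ω | γ ω ≤ (s : ℝ≥0∞)}ᶜ := by ext; simp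
      rw [h_eq, prob_compl_eq_one_sub h_meas, tsub_pos_iff_lt]
  refine ⟨fun ht => ?_, fun ht => ?_⟩
  · obtain ⟨_, ⟨s, hs, rfl⟩, hts⟩ := lt_sSup_iff.1 ht
    exact ((h_compl s).1 hs).trans_le (measure_mono fun ω hω => hts.trans hω)
  · obtain ⟨u, -, hu_gt, hu_lim⟩ := exists_seq_strictAnti_tendsto t
    have h_union : {ω | (t : ℝ≥0∞) < γ ω} ⊆ ⋃ n, {ω | (u n : ℝ≥0∞) < γ ω} := fun ω hω =>
      mem_iUnion.2 ((ENNReal.tendsto_coe.2 hu_lim).eventually_lt_const hω).exists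
    obtain ⟨n, hn⟩ := exists_measure_pos_of_not_measure_iUnion_null
      (ht.trans_le (measure_mono h_union)).ne'
    exact (ENNReal.coe_lt_coe.2 (hu_gt n)).trans_le (le_sSup ⟨u n, (h_compl _).2 hn, rfl⟩)

lemma mem_TT_iff [IsProbabilityMeasure μ] (hγ : Measurable γ) :
    t ∈ TT μ γ ↔ (t : ℝ≥0∞) < tG μ γ ∨ (t : ℝ≥0∞) = tG μ γ ∧ CaseB μ γ := by
  refine ⟨fun ht => or_iff_not_imp_left.2 fun h_ge => ?_, ?_⟩
  · have h_eq : (t : ℝ≥0∞) = tG μ γ := by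
      refine le_antisymm (ENNReal.le_of_forall_nnreal_lt fun s hs => ?_) (not_lt.1 h_ge)
      exact ((coe_lt_tG_iff hγ).2 (ht.trans_le (measure_mono fun ω hω => hs.trans_le hω))).le
    have h_null : μ {ω | (t : ℝ≥0∞) < γ ω} = 0 := by
      simpa only [not_lt, nonpos_iff_eq_zero] using mt (coe_lt_tG_iff hγ).2 h_ge
    refine ⟨h_eq, pos_iff_ne_zero.2 fun h_atom => ne_of_gt (a := μ {ω | ↑t ≤ γ ω}) ht ?_⟩
    refine measure_mono_null (fun ω (hω : t ≤ γ ω) => ?_) (measure_union_null h_null h_atom)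
    exact hω.lt_or_eq.imp id fun h => ⟨h.symm.trans h_eq, h_eq ▸ ENNReal.coe_lt_top⟩
  · rintro (h_lt | ⟨h_eq, hB⟩)
    · exact ((coe_lt_tG_iff hγ).1 h_lt).trans_le (measure_mono fun ω (hω : t < γ ω) => hω.le)
    · exact hB.trans_le (measure_mono fun ω hω => h_eq.trans_le hω.1.ge)

lemma leftF_coe (t : ℝ≥0) : leftF t = 𝓝[<] t := by
  rw [leftF, nhdsWithin, comap_inf, comap_principal, ← ENNReal.isEmbedding_coe.nhds_eq_comap]
  simp [nhdsWithin, Iio]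

lemma Gbar_eq_law (hγ : Measurable γ) (t : ℝ≥0) : Gbar μ γ t = (μ.map γ).real (Ioi ↑t) :=
  (map_measureReal_apply hγ measurableSet_Ioi).symm

lemma GbarLeft_eq_law (hγ : Measurable γ) (t : ℝ≥0) : GbarLeft μ γ t = (μ.map γ).real (Ici ↑t) :=
  (map_measureReal_apply hγ measurableSet_Ici).symm

lemma GbarLeft_pos [IsFiniteMeasure μ] (ht : t ∈ TT μ γ) : 0 < GbarLeft μ γ t :=
  ENNReal.toReal_pos ht.ne' (measure_ne_top _ _)

lemma GbarLeft_eq_Gbar_add [IsFiniteMeasure μ] (hγ : Measurable γ) (t : ℝ≥0) :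
    GbarLeft μ γ t = Gbar μ γ t + μ.real (γ ⁻¹' {(t : ℝ≥0∞)}) := by
  rw [Gbar_eq_law hγ, GbarLeft_eq_law hγ, ← map_measureReal_apply hγ (measurableSet_singleton _),
    ← Ioi_union_left, measureReal_union (by simp) (measurableSet_singleton _)]

lemma tendsto_Gbar_nhdsLT [IsFiniteMeasure μ] (hγ : Measurable γ) (ht : 0 < t) :
    Tendsto (Gbar μ γ) (𝓝[<] t) (𝓝 (GbarLeft μ γ t)) := by
  rw [GbarLeft_eq_law hγ, ← leftF_coe, leftF, funext (Gbar_eq_law hγ)]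
  exact (tendsto_measureReal_Ioi_nhdsLT (μ.map γ) (ENNReal.coe_pos.2 ht)).comp tendsto_comap

end Endpoint

section CondM

variable [MeasurableSpace Ω] {μ : Measure Ω} {γ : Ω → ℝ≥0∞} {F H : ℝ≥0 → ℝ} {t : ℝ≥0}

/-- `E(|L| 1_{γ ≤ t}) < ∞` for all `t ∈ 𝒯`. -/
def LocIntegrable (μ : Measure Ω) (γ : Ω → ℝ≥0∞) (L : Ω → ℝ) : Prop :=
  ∀ t ∈ TT μ γ, IntegrableOn L (γ ⁻¹' Iic (t : ℝ≥0∞)) μ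

/-- The balance equation `F(t) Ḡ(t) + E(L 1_{0 < γ ≤ t}) = F(0) Ḡ(0)` on `𝒯`: the expectation over
`{γ > 0}` of the process that equals `F` before `γ` and `L` from `γ` on does not depend on time. -/
def Balanced (μ : Measure Ω) (γ : Ω → ℝ≥0∞) (F : ℝ≥0 → ℝ) (L : Ω → ℝ) : Prop :=
  ∀ t ∈ TT μ γ,
    F t * Gbar μ γ t + ∫ ω in γ ⁻¹' Ioc 0 (t : ℝ≥0∞), L ω ∂μ = F 0 * Gbar μ γ 0

lemma memL1loc_iff (hγ : Measurable γ) :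
    MemL1loc μ γ H ↔ Measurable H ∧ LocIntegrable μ γ fun ω => H (γ ω).toNNReal := by
  refine and_congr_right fun hH => forall₂_congr fun t _ => ?_
  rw [← bot_eq_zero, Icc_bot, IntegrableOn, Measure.restrict_map hγ measurableSet_Iic]
  exact integrable_map_measure (hH.comp ENNReal.measurable_toNNReal).aestronglyMeasurable
    hγ.aemeasurable

lemma setIntegral_law_Ioc (hγ : Measurable γ) (hH : Measurable H) (t : ℝ≥0) :
    ∫ x in Ioc 0 (t : ℝ≥0∞), H x.toNNReal ∂(μ.map γ)
      = ∫ ω in γ ⁻¹' Ioc 0 (t : ℝ≥0∞), H (γ ω).toNNReal ∂μ :=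
  setIntegral_map measurableSet_Ioc (hH.comp ENNReal.measurable_toNNReal).aestronglyMeasurable
    hγ.aemeasurable

lemma tendsto_nhdsLT_of_balance [IsFiniteMeasure μ] (hγ : Measurable γ) (ht : t ∈ TT μ γ)
    (ht_pos : 0 < t) {L : Ω → ℝ} (hL : IntegrableOn L (γ ⁻¹' Ioo 0 (t : ℝ≥0∞)) μ) {C : ℝ}
    (h_bal : ∀ u < t, F u * Gbar μ γ u + ∫ ω in γ ⁻¹' Ioc 0 (u : ℝ≥0∞), L ω ∂μ = C) :
    Tendsto F (𝓝[<] t)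
      (𝓝 ((C - ∫ ω in γ ⁻¹' Ioo 0 (t : ℝ≥0∞), L ω ∂μ) / GbarLeft μ γ t)) := by
  have h_int : Tendsto (fun u : ℝ≥0 => ∫ ω in γ ⁻¹' Ioc 0 (u : ℝ≥0∞), L ω ∂μ) (𝓝[<] t)
      (𝓝 (∫ ω in γ ⁻¹' Ioo 0 (t : ℝ≥0∞), L ω ∂μ)) := by
    rw [← leftF_coe]
    exact (tendsto_setIntegral_preimage_Ioc_nhdsLT hγ hL).comp tendsto_comap
  refine ((h_int.const_sub C).div (tendsto_Gbar_nhdsLT hγ ht_pos) (GbarLeft_pos ht).ne').congr' ?_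
  filter_upwards [self_mem_nhdsWithin] with u (hu : u < t)
  have hu_pos : 0 < Gbar μ γ u := (GbarLeft_pos ht).trans_le <|
    measureReal_mono fun ω (hω : t ≤ γ ω) => (ENNReal.coe_lt_coe.2 hu).trans_le hω
  rw [Pi.div_apply, ← h_bal u hu, add_sub_cancel_right, mul_div_cancel_right₀ _ hu_pos.ne']

/- The balance equation at an atom `t` with `Ḡ(t) = 0` reads
`E(H(γ) 1_{0 < γ < t}) + H(t) P(γ = t) = C`, while `F(t-) P(γ = t) = C - E(H(γ) 1_{0 < γ < t})`. -/
lemma tendsto_nhdsLT_iff_balance [IsFiniteMeasure μ] (hγ : Measurable γ) (ht : t ∈ TT μ γ)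
    (ht_end : Gbar μ γ t = 0)
    (hH : IntegrableOn (fun ω => H (γ ω).toNNReal) (γ ⁻¹' Iic (t : ℝ≥0∞)) μ)
    (h_bal : ∀ u < t, F u * Gbar μ γ u + ∫ ω in γ ⁻¹' Ioc 0 (u : ℝ≥0∞), H (γ ω).toNNReal ∂μ
      = F 0 * Gbar μ γ 0) :
    Tendsto F (𝓝[<] t) (𝓝 (H t)) ↔
      F t * Gbar μ γ t + ∫ ω in γ ⁻¹' Ioc 0 (t : ℝ≥0∞), H (γ ω).toNNReal ∂μ
        = F 0 * Gbar μ γ 0 := by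
  rcases eq_zero_or_pos t with rfl | ht_pos
  · simp
  have h_sub : γ ⁻¹' Ioo 0 (t : ℝ≥0∞) ⊆ γ ⁻¹' Iic (t : ℝ≥0∞) := fun ω hω => hω.2.le
  have h_lim := tendsto_nhdsLT_of_balance hγ ht ht_pos (hH.mono_set h_sub) h_bal
  have h_split : ∫ ω in γ ⁻¹' Ioc 0 (t : ℝ≥0∞), H (γ ω).toNNReal ∂μ
      = ∫ ω in γ ⁻¹' Ioo 0 (t : ℝ≥0∞), H (γ ω).toNNReal ∂μ + H t * GbarLeft μ γ t := by
    have h_atom : ∫ ω in γ ⁻¹' {(t : ℝ≥0∞)}, H (γ ω).toNNReal ∂μ = H t * GbarLeft μ γ t := by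
      rw [GbarLeft_eq_Gbar_add hγ, ht_end, zero_add, mul_comm, ← smul_eq_mul, ← setIntegral_const]
      exact setIntegral_congr_fun (hγ (measurableSet_singleton _)) fun ω hω => by
        simp only [mem_singleton_iff.1 hω, ENNReal.toNNReal_coe]
    rw [← Ioo_union_right (ENNReal.coe_pos.2 ht_pos), preimage_union, setIntegral_union
      (.preimage γ (by simp)) (hγ (measurableSet_singleton _)) (hH.mono_set h_sub)
      (hH.mono_set fun ω hω => hω.le), h_atom]
  have : (𝓝[<] t).NeBot := nhdsLT_neBot_of_exists_lt ⟨0, ht_pos⟩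
  rw [h_split, ht_end, mul_zero, zero_add, ← eq_sub_iff_add_eq', ← eq_div_iff (GbarLeft_pos ht).ne']
  exact ⟨fun h => tendsto_nhds_unique h h_lim, fun h => h ▸ h_lim⟩

lemma exists_locAC [IsProbabilityMeasure μ] (hγ : Measurable γ) (hH : MemL1loc μ γ H)
    (h_bal : ∀ t : ℝ≥0, (t : ℝ≥0∞) < tG μ γ →
      F t * Gbar μ γ t + ∫ x in Ioc 0 (t : ℝ≥0∞), H x.toNNReal ∂(μ.map γ) = F 0 * Gbar μ γ 0) :
    ∃ z, LocAC μ γ F z := by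
  have : IsProbabilityMeasure (μ.map γ) := Measure.isProbabilityMeasure_map hγ.aemeasurable
  set C := F 0 * Gbar μ γ 0
  set f := balanceSolution (μ.map γ) 0 C fun x => H x.toNNReal
  set z := balanceDensity (μ.map γ) 0 C fun x => H x.toNNReal
  have hz : ∀ t : ℝ≥0, EqOn z (fun x => z x.toNNReal) (Iic t) := fun t x hx => by
    simp only [ENNReal.coe_toNNReal (ne_top_of_le_ne_top ENNReal.coe_ne_top hx)]
  have h_tail : ∀ t : ℝ≥0, (t : ℝ≥0∞) < tG μ γ → 0 < (μ.map γ).real (Ioi (t : ℝ≥0∞)) :=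
    fun t ht => by
      rw [← Gbar_eq_law hγ]
      exact ENNReal.toReal_pos ((coe_lt_tG_iff hγ).1 ht).ne' (by finiteness)
  have hF : ∀ t : ℝ≥0, (t : ℝ≥0∞) < tG μ γ → F t = f t := fun t ht => by
    rw [show f t = _ / _ from rfl, eq_div_iff (h_tail t ht).ne', eq_sub_iff_add_eq,
      ← Gbar_eq_law hγ, h_bal t ht]
  refine ⟨fun t => z t, ⟨?_, fun t ht => ?_⟩, fun t ht => ?_⟩
  · exact (measurable_balanceDensity _ _ _ (hH.1.comp ENNReal.measurable_toNNReal)).comp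
      measurable_coe_nnreal_ennreal
  · have ht_pos : 0 < (μ.map γ).real (Ici (t : ℝ≥0∞)) := GbarLeft_eq_law hγ t ▸ GbarLeft_pos ht
    exact (integrableOn_balanceDensity C (hH.2 t ht) ht_pos).congr_fun
      ((hz t).mono Icc_subset_Iic_self) measurableSet_Icc
  · rw [hF t ht, hF 0 (pos_of_gt ht), ← setIntegral_congr_fun measurableSet_Ioc
      ((hz t).mono Ioc_subset_Iic_self)]
    exact balanceSolution_eq_add_setIntegral C zero_le (hH.2 t ((mem_TT_iff hγ).2 (.inl ht)))
      (h_tail t ht)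

lemma condM_iff [IsProbabilityMeasure μ] (hγ : Measurable γ) :
    CondM μ γ F H ↔ MemL1loc μ γ H ∧ Balanced μ γ F fun ω => H (γ ω).toNNReal := by
  have h_end : ∀ t : ℝ≥0, (t : ℝ≥0∞) = tG μ γ → Gbar μ γ t = 0 := fun t ht => by
    have h_null := mt (coe_lt_tG_iff (t := t) hγ).2 ht.not_lt
    rw [Gbar, nonpos_iff_eq_zero.1 (not_lt.1 h_null), ENNReal.toReal_zero]
  refine ⟨fun ⟨_, hH, h_bal, h_lim⟩ => ⟨hH, fun t ht => ?_⟩, fun ⟨hH, h_bal⟩ => ?_⟩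
  · simp only [setIntegral_law_Ioc hγ hH.1] at h_bal
    rcases (mem_TT_iff hγ).1 ht with h_lt | ⟨h_eq, hB⟩
    · exact h_bal t h_lt
    · have h_lim := h_lim hB
      rw [← h_eq, leftF_coe, ENNReal.toNNReal_coe] at h_lim
      refine (tendsto_nhdsLT_iff_balance hγ ht (h_end t h_eq)
        (((memL1loc_iff hγ).1 hH).2 t ht) fun u hu => h_bal u ?_).1 h_lim
      exact (ENNReal.coe_lt_coe.2 hu).trans_eq h_eq
  · have h_bal' : ∀ t : ℝ≥0, (t : ℝ≥0∞) < tG μ γ →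
        F t * Gbar μ γ t + ∫ x in Ioc 0 (t : ℝ≥0∞), H x.toNNReal ∂(μ.map γ) = F 0 * Gbar μ γ 0 :=
      fun t ht => by
        rw [setIntegral_law_Ioc hγ hH.1]
        exact h_bal t ((mem_TT_iff hγ).2 (.inl ht))
    refine ⟨exists_locAC hγ hH h_bal', hH, h_bal', fun hB => ?_⟩
    obtain ⟨_, -, h_fin⟩ := nonempty_of_measure_ne_zero hB.ne'
    obtain ⟨τ, h_eq⟩ : ∃ τ : ℝ≥0, (τ : ℝ≥0∞) = tG μ γ := ⟨_, ENNReal.coe_toNNReal h_fin.ne⟩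
    have hτ : τ ∈ TT μ γ := (mem_TT_iff hγ).2 (.inr ⟨h_eq, hB⟩)
    rw [← h_eq, leftF_coe, ENNReal.toNNReal_coe]
    exact (tendsto_nhdsLT_iff_balance hγ hτ (h_end τ h_eq)
      (((memL1loc_iff hγ).1 hH).2 τ hτ)
      fun u hu => h_bal u (isLowerSet_TT μ γ hu.le hτ)).2 (h_bal τ hτ)

end CondM

/-! ### From a balanced single jump process to a local martingale -/

section TruncationTime

/-- The random time that equals `τ` if the jump has not occurred by time `τ`, and `∞` otherwise.
Along `τ ↑ sup 𝒯` it localizes the balanced single jump processes. -/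
def truncationTime (γ : Ω → ℝ≥0∞) (τ : ℝ≥0) (ω : Ω) : ℝ≥0∞ :=
  if (τ : ℝ≥0∞) < γ ω then τ else ⊤

variable {γ : Ω → ℝ≥0∞} {M : ℝ≥0 → Ω → ℝ} {t τ : ℝ≥0}

lemma monotone_truncationTime (γ : Ω → ℝ≥0∞) (ω : Ω) :
    Monotone fun τ => truncationTime γ τ ω := by
  intro σ τ hστ
  have hστ' : (σ : ℝ≥0∞) ≤ τ := ENNReal.coe_le_coe.2 hστ
  by_cases hτ : (τ : ℝ≥0∞) < γ ω
  · simpa only [truncationTime, if_pos hτ, if_pos (hστ'.trans_lt hτ)] using hστ'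
  · simp only [truncationTime, if_neg hτ, le_top]

lemma stopped_truncationTime_of_le (ht : t ≤ τ) : stopped M (truncationTime γ τ) t = M t := by
  have ht' : (t : ℝ≥0∞) ≤ τ := ENNReal.coe_le_coe.2 ht
  ext ω
  by_cases hω : (τ : ℝ≥0∞) < γ ω <;> simp [stopped, truncationTime, hω, ht']

lemma stopped_truncationTime_of_ge (ht : τ ≤ t) :
    stopped M (truncationTime γ τ) t = (jumpSet γ τ).piecewise (M τ) (M t) := by
  have ht' : (τ : ℝ≥0∞) ≤ t := ENNReal.coe_le_coe.2 ht
  ext ω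
  by_cases hω : (τ : ℝ≥0∞) < γ ω <;> simp [stopped, truncationTime, piecewise, jumpSet, hω, ht']

variable [m : MeasurableSpace Ω]

lemma isSJStoppingTime_truncationTime (hγ : Measurable γ) (τ : ℝ≥0) :
    IsSJStoppingTime γ (truncationTime γ τ) := by
  intro t
  rw [← measurableSet_jumpσ_iff]
  rcases le_or_gt τ t with h_le | h_lt
  · convert jumpσ_mono γ h_le _ (measurableSet_jumpSet hγ τ) using 1
    ext ω
    by_cases hω : (τ : ℝ≥0∞) < γ ω <;> simp [truncationTime, jumpSet, hω, h_le]
  · convert @MeasurableSet.empty _ (jumpσ m γ t) using 1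
    ext ω
    by_cases hω : (τ : ℝ≥0∞) < γ ω <;> simp [truncationTime, hω, h_lt]

lemma measurable_stopped_truncationTime (hγ : Measurable γ)
    (hM : ∀ t, Measurable[jumpσ m γ t] (M t)) (τ t : ℝ≥0) :
    Measurable[jumpσ m γ t] (stopped M (truncationTime γ τ) t) := by
  rcases le_total t τ with ht | ht
  · rw [stopped_truncationTime_of_le ht]
    exact hM t
  · rw [stopped_truncationTime_of_ge ht]
    exact Measurable.piecewise (m := jumpσ m γ t)
      (jumpσ_mono γ ht _ (measurableSet_jumpSet hγ τ)) ((hM τ).mono (jumpσ_mono γ ht) le_rfl) (hM t)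

lemma ae_tendsto_truncationTime {μ : Measure Ω} {τ : ℕ → ℝ≥0}
    (hτ : ∀ t ∈ TT μ γ, ∀ᶠ n in atTop, t ≤ τ n) :
    ∀ᵐ ω ∂μ, Tendsto (fun n => truncationTime γ (τ n) ω) atTop (𝓝 ⊤) := by
  filter_upwards [ae_forall_le_mem_TT μ γ] with ω hω
  refine ENNReal.tendsto_nhds_top_iff_nnreal.2 fun c => ?_
  lift min (c + 1 : ℝ≥0∞) (γ ω) to ℝ≥0 using
    (min_lt_of_left_lt (by finiteness : (c + 1 : ℝ≥0∞) < ⊤)).ne with s hs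
  filter_upwards [hτ s (hω s (hs.trans_le (min_le_right _ _)))] with n hn
  by_cases hn_lt : (τ n : ℝ≥0∞) < γ ω
  · rw [truncationTime, if_pos hn_lt]
    have h_min : min (c + 1 : ℝ≥0∞) (γ ω) ≤ τ n := hs ▸ ENNReal.coe_le_coe.2 hn
    have hc : (c + 1 : ℝ≥0∞) ≤ τ n := (min_le_iff.1 h_min).resolve_right hn_lt.not_ge
    exact (ENNReal.lt_add_right ENNReal.coe_ne_top one_ne_zero).trans_le hc
  · rw [truncationTime, if_neg hn_lt]
    exact ENNReal.coe_lt_top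

end TruncationTime

/-- Up to indistinguishability, the process `M` equals the deterministic function `F` strictly
before `γ` and the random variable `L` from `γ` on. -/
def IsSingleJump [MeasurableSpace Ω] (μ : Measure Ω) (γ : Ω → ℝ≥0∞) (M : ℝ≥0 → Ω → ℝ)
    (F : ℝ≥0 → ℝ) (L : Ω → ℝ) : Prop :=
  ∀ᵐ ω ∂μ, ∀ t : ℝ≥0, M t ω = if (t : ℝ≥0∞) < γ ω then F t else L ω

namespace IsSingleJump

variable [m : MeasurableSpace Ω] {μ : Measure Ω} {γ : Ω → ℝ≥0∞} {M : ℝ≥0 → Ω → ℝ}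
  {F : ℝ≥0 → ℝ} {L : Ω → ℝ} {s t : ℝ≥0}

lemma ae_eq_of_lt (h : IsSingleJump μ γ M F L) (t : ℝ≥0) :
    ∀ᵐ ω ∂μ, (t : ℝ≥0∞) < γ ω → M t ω = F t :=
  h.mono fun _ hω ht => (hω t).trans (if_pos ht)

lemma ae_eq_of_ge (h : IsSingleJump μ γ M F L) (t : ℝ≥0) :
    ∀ᵐ ω ∂μ, γ ω ≤ t → M t ω = L ω :=
  h.mono fun _ hω ht => (hω t).trans (if_neg ht.not_gt)

lemma integrable_iff [IsFiniteMeasure μ] (h : IsSingleJump μ γ M F L) (hγ : Measurable γ) :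
    Integrable (M t) μ ↔ IntegrableOn L (γ ⁻¹' Iic (t : ℝ≥0∞)) μ := by
  have h_before : IntegrableOn (M t) (γ ⁻¹' Ioi (t : ℝ≥0∞)) μ :=
    (integrable_const (F t)).congr <| ((ae_restrict_iff' (hγ measurableSet_Ioi)).2
      (h.ae_eq_of_lt t)).mono fun _ hω => hω.symm
  rw [← integrableOn_univ, ← preimage_univ (f := γ), ← Iic_union_Ioi (a := (t : ℝ≥0∞)),
    preimage_union, integrableOn_union, and_iff_left h_before]
  exact integrableOn_congr_fun_ae ((ae_restrict_iff' (hγ measurableSet_Iic)).2 (h.ae_eq_of_ge t))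

lemma setIntegral_jumpSet [IsFiniteMeasure μ] (h : IsSingleJump μ γ M F L) (hγ : Measurable γ)
    (hst : s ≤ t) (hL : IntegrableOn L (γ ⁻¹' Iic (t : ℝ≥0∞)) μ) :
    ∫ ω in jumpSet γ s, M t ω ∂μ
      = F t * Gbar μ γ t + ∫ ω in γ ⁻¹' Ioc (s : ℝ≥0∞) t, L ω ∂μ := by
  have h_split : jumpSet γ s = γ ⁻¹' Ioi (t : ℝ≥0∞) ∪ γ ⁻¹' Ioc (s : ℝ≥0∞) t := by
    rw [← preimage_union, union_comm, Ioc_union_Ioi_eq_Ioi (ENNReal.coe_le_coe.2 hst)]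
    rfl
  have h_disj : Disjoint (Ioi (t : ℝ≥0∞)) (Ioc (s : ℝ≥0∞) t) :=
    disjoint_left.2 fun _ hx hx' => hx'.2.not_gt hx
  have hM : Integrable (M t) μ := (h.integrable_iff hγ).2 hL
  rw [h_split, setIntegral_union (h_disj.preimage γ) (hγ measurableSet_Ioc) hM.integrableOn
    hM.integrableOn, setIntegral_congr_ae (hγ measurableSet_Ioi) (h.ae_eq_of_lt t),
    setIntegral_const, smul_eq_mul, mul_comm, setIntegral_congr_ae (hγ measurableSet_Ioc)
    ((h.ae_eq_of_ge t).mono fun ω hω hω' => hω hω'.2)]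
  rfl

lemma setIntegral_jumpSet_of_balanced [IsFiniteMeasure μ] (h : IsSingleJump μ γ M F L)
    (hγ : Measurable γ) (hL : LocIntegrable μ γ L) (h_bal : Balanced μ γ F L) (hst : s ≤ t)
    (ht : t ∈ TT μ γ) :
    ∫ ω in jumpSet γ s, M t ω ∂μ
      = F 0 * Gbar μ γ 0 - ∫ ω in γ ⁻¹' Ioc 0 (s : ℝ≥0∞), L ω ∂μ := by
  have hst' : (s : ℝ≥0∞) ≤ t := ENNReal.coe_le_coe.2 hst
  have h_disj : Disjoint (Ioc 0 (s : ℝ≥0∞)) (Ioc (s : ℝ≥0∞) t) :=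
    disjoint_left.2 fun _ hx hx' => hx.2.not_gt hx'.1
  have h_split : ∫ ω in γ ⁻¹' Ioc 0 (t : ℝ≥0∞), L ω ∂μ
      = ∫ ω in γ ⁻¹' Ioc 0 (s : ℝ≥0∞), L ω ∂μ + ∫ ω in γ ⁻¹' Ioc (s : ℝ≥0∞) t, L ω ∂μ := by
    rw [← Ioc_union_Ioc_eq_Ioc zero_le hst', preimage_union, setIntegral_union
      (h_disj.preimage γ) (hγ measurableSet_Ioc)
      ((hL t ht).mono_set fun ω hω => hω.2.trans hst') ((hL t ht).mono_set fun ω hω => hω.2)]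
  rw [h.setIntegral_jumpSet hγ hst (hL t ht), ← h_bal t ht, h_split]
  ring

lemma ae_eq_condExp [IsFiniteMeasure μ] (h : IsSingleJump μ γ M F L) (hγ : Measurable γ)
    (hM : ∀ t, Measurable[jumpσ m γ t] (M t)) (hL : LocIntegrable μ γ L)
    (h_bal : Balanced μ γ F L) (hst : s ≤ t) (ht : t ∈ TT μ γ) :
    M s =ᵐ[μ] μ[M t | jumpσ m γ s] := by
  have hs : s ∈ TT μ γ := isLowerSet_TT μ γ hst ht
  have hMs : Integrable (M s) μ := (h.integrable_iff hγ).2 (hL s hs)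
  have hMt : Integrable (M t) μ := (h.integrable_iff hγ).2 (hL t ht)
  refine ae_eq_condExp_of_forall_setIntegral_eq (jumpσ_le γ s) hMt (fun _ _ _ => hMs.integrableOn)
    (fun A hA _ => setIntegral_eq_of_measurableSet_jumpσ hγ hMs hMt ?_ ?_ hA)
    (hM s).stronglyMeasurable.aestronglyMeasurable
  · rw [h.setIntegral_jumpSet_of_balanced hγ hL h_bal le_rfl hs,
      h.setIntegral_jumpSet_of_balanced hγ hL h_bal hst ht]
  · filter_upwards [h.ae_eq_of_ge s, h.ae_eq_of_ge t] with ω hωs hωt hω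
    rw [hωs hω, hωt (hω.trans (ENNReal.coe_le_coe.2 hst))]

lemma uiMartingale_stopped [IsFiniteMeasure μ] (h : IsSingleJump μ γ M F L) (hγ : Measurable γ)
    (hM : ∀ t, Measurable[jumpσ m γ t] (M t)) (hL : LocIntegrable μ γ L)
    (h_bal : Balanced μ γ F L) (ht : t ∈ TT μ γ) :
    UIMartingale μ γ (stopped M (truncationTime γ t)) := by
  have hMt : Integrable (M t) μ := (h.integrable_iff hγ).2 (hL t ht)
  refine .of_ae_eq_condExp (measurable_stopped_truncationTime hγ hM t) hMt fun s => ?_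
  rcases le_total s t with hst | hts
  · rw [stopped_truncationTime_of_le hst]
    exact h.ae_eq_condExp hγ hM hL h_bal hst ht
  · rw [stopped_truncationTime_of_ge hts, condExp_of_stronglyMeasurable (jumpσ_le γ s)
      ((hM t).mono (jumpσ_mono γ hts) le_rfl).stronglyMeasurable hMt]
    filter_upwards [h.ae_eq_of_ge s, h.ae_eq_of_ge t] with ω hωs hωt
    by_cases hω : ω ∈ jumpSet γ t
    · rw [piecewise_eq_of_mem _ _ _ hω]
    · have hω' : γ ω ≤ t := not_lt.1 hω
      rw [piecewise_eq_of_notMem _ _ _ hω, hωt hω', hωs (hω'.trans (ENNReal.coe_le_coe.2 hts))]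

lemma ae_cadlag [IsFiniteMeasure μ] (h : IsSingleJump μ γ M F L) (hγ : Measurable γ)
    (hM : ∀ ω t, ContinuousWithinAt (fun s => M s ω) (Ici t) t)
    (hL : LocIntegrable μ γ L) (h_bal : Balanced μ γ F L) :
    ∀ᵐ ω ∂μ, Cadlag fun t => M t ω := by
  filter_upwards [h, ae_forall_le_mem_TT μ γ] with ω hω hω_TT
  refine ⟨hM ω, fun t ht_pos => ?_⟩
  rcases lt_or_ge (γ ω) t with h_after | h_before
  · lift γ ω to ℝ≥0 using (h_after.trans_le le_top).ne with g
    refine ⟨L ω, tendsto_const_nhds.congr' ?_⟩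
    filter_upwards [Ioo_mem_nhdsLT (ENNReal.coe_lt_coe.1 h_after)] with u hu
    rw [hω u, if_neg (ENNReal.coe_lt_coe.2 hu.1).not_gt]
  · have ht : t ∈ TT μ γ := hω_TT t h_before
    refine ⟨_, (tendsto_nhdsLT_of_balance hγ ht ht_pos
      ((hL t ht).mono_set fun ω hω => hω.2.le)
      fun u hu => h_bal u (isLowerSet_TT μ γ hu.le ht)).congr' ?_⟩
    filter_upwards [self_mem_nhdsWithin] with u hu
    rw [hω u, if_pos ((ENNReal.coe_lt_coe.2 hu).trans_le h_before)]

theorem localMartingale [IsFiniteMeasure μ] [NeZero μ] (h : IsSingleJump μ γ M F L)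
    (hγ : Measurable γ) (hM : ∀ t, Measurable[jumpσ m γ t] (M t))
    (hM_rc : ∀ ω t, ContinuousWithinAt (fun s => M s ω) (Ici t) t)
    (hL : LocIntegrable μ γ L) (h_bal : Balanced μ γ F L) : LocalMartingale μ γ M := by
  obtain ⟨τ, hτ_mono, hτ_mem, hτ_cofinal⟩ := exists_monotone_seq_cofinal_TT μ γ
  refine ⟨hM, h.ae_cadlag hγ hM_rc hL h_bal, fun n => truncationTime γ (τ n),
    fun n => isSJStoppingTime_truncationTime hγ (τ n), ?_,
    fun n => h.uiMartingale_stopped hγ hM hL h_bal (hτ_mem n)⟩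
  filter_upwards [ae_tendsto_truncationTime hτ_cofinal] with ω hω
  exact ⟨(monotone_truncationTime γ ω).comp hτ_mono, hω⟩

end IsSingleJump

/-! ### From a local martingale to a balanced single jump process -/

lemma eq_of_forall_dense_ge {α β : Type*} [LinearOrder α] [TopologicalSpace α] [OrderTopology α]
    [DenselyOrdered α] [NoMaxOrder α] [TopologicalSpace β] [T1Space β] {f : α → β} {D : Set α}
    (hD : Dense D) {t : α} {c : β} (hf : ContinuousWithinAt f (Ici t) t)
    (h : ∀ q ∈ D, t ≤ q → f q = c) : f t = c := by
  have ht : t ∈ closure (Ioi t ∩ D) :=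
    closure_minimal (hD.open_subset_closure_inter isOpen_Ioi) isClosed_closure
      (closure_Ioi t ▸ self_mem_Ici)
  have h_image : f '' (Ioi t ∩ D) ⊆ {c} := by
    rintro _ ⟨q, hq, rfl⟩
    exact h q hq.2 (le_of_lt hq.1)
  have h_closure := closure_mono h_image
    ((hf.mono fun q hq => le_of_lt hq.1).mem_closure_image ht)
  rwa [closure_singleton] at h_closure

lemma stopped_of_le {M : ℝ≥0 → Ω → ℝ} {T : Ω → ℝ≥0∞} {t : ℝ≥0} {ω : Ω} (h : t ≤ T ω) :
    stopped M T t ω = M t ω := by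
  rw [stopped, inf_eq_left.2 h, ENNReal.toNNReal_coe]

/-- The value at infinity of a process that is eventually constant in time; the `limsup` makes it
measurable. -/
def terminalValue (M : ℝ≥0 → Ω → ℝ) (ω : Ω) : ℝ := limsup (fun n : ℕ => M n ω) atTop

section Terminal

variable [m : MeasurableSpace Ω] {μ : Measure Ω} {γ : Ω → ℝ≥0∞} {M : ℝ≥0 → Ω → ℝ} {s t : ℝ≥0}

lemma condExp_jumpσ_ae_eq_of_ge [IsFiniteMeasure μ] (hγ : Measurable γ) {f : Ω → ℝ}
    (hf : Integrable f μ) (t : ℝ≥0) : ∀ᵐ ω ∂μ, γ ω ≤ t → μ[f | jumpσ m γ t] ω = f ω := by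
  have hS : MeasurableSet[jumpσ m γ t] (jumpSet γ t)ᶜ :=
    @MeasurableSet.compl _ _ (jumpσ m γ t) (measurableSet_jumpSet hγ t)
  have h_trace : ∀ A : Set Ω, MeasurableSet[jumpσ m γ t] ((jumpSet γ t)ᶜ ∩ A) ↔
      MeasurableSet[m] ((jumpSet γ t)ᶜ ∩ A) := fun A =>
    ⟨jumpσ_le γ t _, fun hA => measurableSet_jumpσ_iff.2 (mem_jumpColl_iff.2
      ⟨hA, .inl (disjoint_compl_left.mono_left inter_subset_left)⟩)⟩
  have h_eq := condExp_ae_eq_restrict_of_measurableSpace_eq_on (f := f) (μ := μ) (jumpσ_le γ t)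
    le_rfl hS h_trace
  filter_upwards [(ae_restrict_iff' (jumpσ_le γ t _ hS)).1 h_eq,
    condExp_of_aestronglyMeasurable' le_rfl hf.1 hf] with ω hω hω' hωt
  rw [hω hωt.not_gt, hω']

lemma UIMartingale.ae_eq_of_ge [IsFiniteMeasure μ] (hM : UIMartingale μ γ M) (hγ : Measurable γ)
    (hst : s ≤ t) : ∀ᵐ ω ∂μ, γ ω ≤ s → M t ω = M s ω := by
  obtain ⟨⟨-, h_int, h_mart⟩, -⟩ := hM
  filter_upwards [condExp_jumpσ_ae_eq_of_ge hγ (h_int t (mem_univ t)) s,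
    h_mart s (mem_univ s) t (mem_univ t) hst] with ω hω hω' hωs
  rw [← hω hωs, hω']

lemma LocalMartingale.ae_eq_of_ge [IsFiniteMeasure μ] (hM : LocalMartingale μ γ M)
    (hγ : Measurable γ) (hst : s ≤ t) : ∀ᵐ ω ∂μ, γ ω ≤ s → M t ω = M s ω := by
  obtain ⟨-, -, T, -, hT_lim, hT_mart⟩ := hM
  filter_upwards [ae_all_iff.2 fun n => (hT_mart n).ae_eq_of_ge hγ hst, hT_lim] with ω hω hω_lim hωs
  obtain ⟨n, hn⟩ := (hω_lim.2.eventually_const_lt (ENNReal.coe_lt_top (r := t))).exists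
  simpa only [stopped_of_le hn.le, stopped_of_le ((ENNReal.coe_le_coe.2 hst).trans hn.le)]
    using hω n hωs

lemma measurable_terminalValue (hM : ∀ t, Measurable (M t)) : Measurable (terminalValue M) :=
  .limsup fun n => hM n

lemma LocalMartingale.ae_eq_terminalValue [IsFiniteMeasure μ] (hM : LocalMartingale μ γ M)
    (hγ : Measurable γ) (hM_rc : ∀ ω t, ContinuousWithinAt (fun s => M s ω) (Ici t) t) :
    ∀ᵐ ω ∂μ, ∀ t : ℝ≥0, γ ω ≤ t → M t ω = terminalValue M ω := by
  have h_fixed : ∀ t : ℝ≥0, ∀ᵐ ω ∂μ, γ ω ≤ t → M t ω = terminalValue M ω := fun t => by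
    have h_nat : ∀ᵐ ω ∂μ, ∀ n : ℕ, t ≤ n → γ ω ≤ t → M n ω = M t ω :=
      ae_all_iff.2 fun n => eventually_imp_distrib_left.2 (hM.ae_eq_of_ge hγ)
    filter_upwards [h_nat] with ω hω hωt
    have h_ev : ∀ᶠ n : ℕ in atTop, M n ω = M t ω :=
      (eventually_ge_atTop ⌈t⌉₊).mono fun n hn => hω n (Nat.ceil_le.1 hn) hωt
    rw [terminalValue, limsup_congr h_ev, limsup_const]
  obtain ⟨D, hD_count, hD_dense⟩ := TopologicalSpace.exists_countable_dense ℝ≥0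
  filter_upwards [(ae_ball_iff hD_count).2 fun q _ => h_fixed q] with ω hω t ht
  exact eq_of_forall_dense_ge hD_dense (hM_rc ω t) fun q hq htq =>
    hω q hq (ht.trans (ENNReal.coe_le_coe.2 htq))

end Terminal

namespace LocalMartingale

variable [m : MeasurableSpace Ω] {μ : Measure Ω} {γ : Ω → ℝ≥0∞} {M : ℝ≥0 → Ω → ℝ} {t : ℝ≥0}

/- On a set of positive measure `γ ≥ t` and `T n ≥ t` for large `n`. A stopping time takes a single
value before the jump, so `T n` can only be below `t` after the jump, where `M` is constant. -/
lemma exists_stopped_ae_eq [IsFiniteMeasure μ] (hM : LocalMartingale μ γ M) (hγ : Measurable γ)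
    (hM_rc : ∀ ω t, ContinuousWithinAt (fun s => M s ω) (Ici t) t) (ht : t ∈ TT μ γ) :
    ∃ T : Ω → ℝ≥0∞, UIMartingale μ γ (stopped M T) ∧ stopped M T t =ᵐ[μ] M t := by
  have h_terminal := hM.ae_eq_terminalValue hγ hM_rc
  obtain ⟨-, -, T, hT, hT_lim, hT_mart⟩ := hM
  have h_freq : ∃ᵐ ω ∂μ, (t : ℝ≥0∞) ≤ γ ω := frequently_ae_iff.2 (ne_of_gt ht)
  obtain ⟨ω₀, hω₀, -, hω₀_lim⟩ := (h_freq.and_eventually hT_lim).exists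
  obtain ⟨n, hn⟩ := (hω₀_lim.eventually_const_lt (ENNReal.coe_lt_top (r := t))).exists
  refine ⟨T n, hT_mart n, ?_⟩
  filter_upwards [h_terminal] with ω hω
  rcases le_or_gt (t : ℝ≥0∞) (T n ω) with h_le | h_lt
  · exact stopped_of_le h_le
  · have h_jump : γ ω ≤ T n ω := not_lt.1 fun h_before =>
      (h_lt.trans hn).not_ge ((hT n).le_of_lt h_before (h_lt.trans_le hω₀))
    have hT_coe : ((T n ω).toNNReal : ℝ≥0∞) = T n ω := ENNReal.coe_toNNReal (by finiteness)
    rw [stopped, inf_eq_right.2 h_lt.le, hω t (h_jump.trans h_lt.le),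
      hω _ (h_jump.trans_eq hT_coe.symm)]

lemma integrable_and_setIntegral_eq [IsFiniteMeasure μ] (hM : LocalMartingale μ γ M)
    (hγ : Measurable γ) (hM_rc : ∀ ω t, ContinuousWithinAt (fun s => M s ω) (Ici t) t)
    (ht : t ∈ TT μ γ) :
    Integrable (M t) μ ∧ ∫ ω in jumpSet γ 0, M t ω ∂μ = ∫ ω in jumpSet γ 0, M 0 ω ∂μ := by
  obtain ⟨T, ⟨⟨-, h_int, h_mart⟩, -⟩, h_eq⟩ := hM.exists_stopped_ae_eq hγ hM_rc ht
  have h_zero : stopped M T 0 = M 0 := funext fun ω => stopped_of_le zero_le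
  have h_condExp : μ[M t | jumpσ m γ 0] =ᵐ[μ] M 0 := h_zero ▸
    (condExp_congr_ae h_eq.symm).trans (h_mart 0 (mem_univ 0) t (mem_univ t) zero_le)
  have hMt : Integrable (M t) μ := (h_int t (mem_univ t)).congr h_eq
  refine ⟨hMt, ?_⟩
  rw [← setIntegral_condExp (jumpσ_le γ 0) hMt (measurableSet_jumpSet hγ 0)]
  exact setIntegral_congr_ae (hγ measurableSet_Ioi) (h_condExp.mono fun _ hω _ => hω)

theorem exists_isSingleJump [IsFiniteMeasure μ] (hM : LocalMartingale μ γ M) (hγ : Measurable γ)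
    (hM_rc : ∀ ω t, ContinuousWithinAt (fun s => M s ω) (Ici t) t) :
    ∃ (F : ℝ≥0 → ℝ) (L : Ω → ℝ), Measurable L ∧ IsSingleJump μ γ M F L ∧ LocIntegrable μ γ L ∧
      Balanced μ γ F L := by
  obtain ⟨F, hF⟩ := exists_eq_of_lt hM.1
  have h_jump : IsSingleJump μ γ M F (terminalValue M) := by
    filter_upwards [hM.ae_eq_terminalValue hγ hM_rc] with ω hω t
    split_ifs with ht
    · exact hF t ω ht
    · exact hω t (not_lt.1 ht)
  have hL : LocIntegrable μ γ (terminalValue M) := fun t ht =>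
    (h_jump.integrable_iff hγ).1 (hM.integrable_and_setIntegral_eq hγ hM_rc ht).1
  have hL_meas : Measurable (terminalValue M) :=
    measurable_terminalValue fun t => (hM.1 t).mono (jumpσ_le γ t) le_rfl
  refine ⟨F, terminalValue M, hL_meas, h_jump, hL, fun t ht => ?_⟩
  have h_mean := (hM.integrable_and_setIntegral_eq hγ hM_rc ht).2
  rw [h_jump.setIntegral_jumpSet hγ zero_le (hL t ht), h_jump.setIntegral_jumpSet hγ le_rfl
    (hL 0 (isLowerSet_TT μ γ zero_le ht))] at h_mean
  simpa using h_mean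

end LocalMartingale

/-! ### Centering the jump given its time -/

section CondMean

variable {β : Type*} [MeasurableSpace Ω] [MeasurableSpace β] {μ : Measure Ω} [IsFiniteMeasure μ]
  {X : Ω → β} {L : Ω → ℝ} {B : Set β}

/-- The regression function `x ↦ E[L | X = x]`. Defining it through the conditional distribution
makes sense of it also where `L` is only locally integrable; its value is `0` at those `x` for which
the conditional distribution has no mean. -/
def condMean (μ : Measure Ω) [IsFiniteMeasure μ] (X : Ω → β) (L : Ω → ℝ) (x : β) : ℝ :=
  ∫ y, y ∂ProbabilityTheory.condDistrib L X μ x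

lemma measurable_condMean (μ : Measure Ω) [IsFiniteMeasure μ] (X : Ω → β) (L : Ω → ℝ) :
    Measurable (condMean μ X L) :=
  (StronglyMeasurable.integral_condDistrib (f := Prod.snd)
    measurable_snd.stronglyMeasurable).measurable

lemma condExp_indicator_ae_eq_condMean (hX : Measurable X) (hL : Measurable L)
    (hB : MeasurableSet B) (hLB : IntegrableOn L (X ⁻¹' B) μ) :
    μ[(X ⁻¹' B).indicator L | MeasurableSpace.comap X inferInstance]
      =ᵐ[μ] (X ⁻¹' B).indicator fun ω => condMean μ X L (X ω) := by
  set f : β × ℝ → ℝ := (Prod.fst ⁻¹' B).indicator Prod.snd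
  have hf : Measurable f := measurable_snd.indicator (measurable_fst hB)
  have hf_int : Integrable (fun ω => f (X ω, L ω)) μ := hLB.integrable_indicator (hX hB)
  have h_condExp := ProbabilityTheory.condExp_prod_ae_eq_integral_condDistrib hX hL.aemeasurable
    hf.stronglyMeasurable hf_int
  refine h_condExp.trans (.of_forall fun ω => ?_)
  by_cases hω : X ω ∈ B <;> simp [f, condMean, indicator, hω]

lemma integrableOn_condMean (hX : Measurable X) (hL : Measurable L) (hB : MeasurableSet B)
    (hLB : IntegrableOn L (X ⁻¹' B) μ) :
    IntegrableOn (fun ω => condMean μ X L (X ω)) (X ⁻¹' B) μ :=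
  (integrable_indicator_iff (hX hB)).1
    (integrable_condExp.congr (condExp_indicator_ae_eq_condMean hX hL hB hLB))

lemma setIntegral_condMean (hX : Measurable X) (hL : Measurable L) (hB : MeasurableSet B)
    (hLB : IntegrableOn L (X ⁻¹' B) μ) :
    ∫ ω in X ⁻¹' B, condMean μ X L (X ω) ∂μ = ∫ ω in X ⁻¹' B, L ω ∂μ := by
  rw [← integral_indicator (hX hB), ← integral_indicator (hX hB),
    ← integral_congr_ae (condExp_indicator_ae_eq_condMean hX hL hB hLB),
    integral_condExp hX.comap_le]

/- Neither term need be integrable on `X ⁻¹' B`, but both are on the subset where `condMean` is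
bounded by `n`, and these subsets exhaust `X ⁻¹' B`. -/
lemma setIntegral_sub_condMean_eq_zero (hX : Measurable X) (hL : Measurable L)
    (hB : MeasurableSet B)
    (h_int : IntegrableOn (fun ω => L ω - condMean μ X L (X ω)) (X ⁻¹' B) μ) :
    ∫ ω in X ⁻¹' B, (L ω - condMean μ X L (X ω)) ∂μ = 0 := by
  set C : ℕ → Set β := fun n => B ∩ {x | |condMean μ X L x| ≤ n}
  have hC : ∀ n, MeasurableSet (C n) := fun n =>
    hB.inter (measurableSet_le (measurable_condMean μ X L).abs measurable_const)
  have hC_mono : Monotone fun n => X ⁻¹' C n := fun n k hnk ω hω =>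
    ⟨hω.1, le_trans (α := ℝ) hω.2 (Nat.cast_le.2 hnk)⟩
  have hC_union : ⋃ n, X ⁻¹' C n = X ⁻¹' B := by
    refine Subset.antisymm (iUnion_subset fun n ω hω => hω.1) fun ω hω => ?_
    obtain ⟨n, hn⟩ := exists_nat_ge |condMean μ X L (X ω)|
    exact mem_iUnion.2 ⟨n, hω, hn⟩
  have h_zero : ∀ n, ∫ ω in X ⁻¹' C n, (L ω - condMean μ X L (X ω)) ∂μ = 0 := fun n => by
    have h_mean : IntegrableOn (fun ω => condMean μ X L (X ω)) (X ⁻¹' C n) μ :=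
      .of_bound (by finiteness) ((measurable_condMean μ X L).comp hX).aestronglyMeasurable n
        ((ae_restrict_iff' (hX (hC n))).2 (.of_forall fun ω hω => hω.2))
    have hL_int : IntegrableOn L (X ⁻¹' C n) μ :=
      ((h_int.mono_set fun ω hω => hω.1).add h_mean).congr
        (.of_forall fun ω => sub_add_cancel (L ω) _)
    rw [integral_sub hL_int h_mean, setIntegral_condMean hX hL (hC n) hL_int, sub_self]
  have h_lim := tendsto_setIntegral_of_monotone (fun n => hX (hC n)) hC_mono (hC_union ▸ h_int)
  simp only [h_zero, hC_union] at h_lim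
  exact tendsto_nhds_unique h_lim tendsto_const_nhds

end CondMean

section Centering

variable [MeasurableSpace Ω] {μ : Measure Ω} {γ : Ω → ℝ≥0∞} {F : ℝ≥0 → ℝ} {L L' : Ω → ℝ}

lemma LocIntegrable.exists_eq_add_condZero [IsFiniteMeasure μ] (hL : LocIntegrable μ γ L)
    (hγ : Measurable γ) (hL_meas : Measurable L) :
    ∃ (H : ℝ≥0 → ℝ) (L' : Ω → ℝ), MemL1loc μ γ H ∧ Measurable L' ∧ LocIntegrable μ γ L' ∧
      CondZeroGivenGamma μ γ L' ∧ ∀ ω, γ ω ≠ ⊤ → L ω = H (γ ω).toNNReal + L' ω := by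
  have h_meas : Measurable (condMean μ γ L) := measurable_condMean μ γ L
  have h_int : LocIntegrable μ γ fun ω => condMean μ γ L (γ ω) := fun t ht =>
    integrableOn_condMean hγ hL_meas measurableSet_Iic (hL t ht)
  refine ⟨fun t => condMean μ γ L t, fun ω => L ω - condMean μ γ L (γ ω),
    (memL1loc_iff hγ).2 ⟨h_meas.comp measurable_coe_nnreal_ennreal, fun t ht => ?_⟩,
    hL_meas.sub (h_meas.comp hγ), fun t ht => (hL t ht).sub (h_int t ht),
    fun B hB => setIntegral_sub_condMean_eq_zero hγ hL_meas hB, fun ω hω => ?_⟩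
  · refine (h_int t ht).congr_fun (fun ω hω => ?_) (hγ measurableSet_Iic)
    simp only [ENNReal.coe_toNNReal (ne_top_of_le_ne_top ENNReal.coe_ne_top hω)]
  · simp only [ENNReal.coe_toNNReal hω, add_sub_cancel]

lemma Balanced.congr_of_ne_top (h_bal : Balanced μ γ F L) (hγ : Measurable γ)
    (h : ∀ ω, γ ω ≠ ⊤ → L ω = L' ω) : Balanced μ γ F L' := fun t ht => by
  rw [← h_bal t ht, setIntegral_congr_fun (hγ measurableSet_Ioc) fun ω hω =>
    (h ω (ne_top_of_le_ne_top ENNReal.coe_ne_top hω.2)).symm]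

lemma balanced_add_condZero_iff (hL : LocIntegrable μ γ L) (hL' : LocIntegrable μ γ L')
    (h_zero : CondZeroGivenGamma μ γ L') :
    Balanced μ γ F (fun ω => L ω + L' ω) ↔ Balanced μ γ F L := by
  refine forall₂_congr fun t ht => ?_
  have h_sub : γ ⁻¹' Ioc 0 (t : ℝ≥0∞) ⊆ γ ⁻¹' Iic (t : ℝ≥0∞) := fun ω hω => hω.2
  rw [integral_add ((hL t ht).mono_set h_sub) ((hL' t ht).mono_set h_sub),
    h_zero _ measurableSet_Ioc ((hL' t ht).mono_set h_sub), add_zero]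

lemma IsSingleJump.congr_of_ne_top {M : ℝ≥0 → Ω → ℝ} (h_jump : IsSingleJump μ γ M F L)
    (h : ∀ ω, γ ω ≠ ⊤ → L ω = L' ω) : IsSingleJump μ γ M F L' := by
  filter_upwards [h_jump] with ω hω t
  rw [hω t]
  split_ifs with ht
  · rfl
  · exact h ω (ne_top_of_le_ne_top ENNReal.coe_ne_top (not_lt.1 ht))

lemma locIntegrable_iff_integrable_indicator (hγ : Measurable γ) :
    LocIntegrable μ γ L ↔ ∀ t ∈ TT μ γ, Integrable (({ω | γ ω ≤ t} : Set Ω).indicator L) μ :=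
  forall₂_congr fun _ _ => (integrable_indicator_iff (hγ measurableSet_Iic)).symm

end Centering

section WithMeasurableSpace

variable [m : MeasurableSpace Ω]

/-- **Theorem 3.** A right-continuous process `M` is a local martingale w.r.t. the single
jump filtration iff it is adapted and, up to indistinguishability,
`M_t = F(t)·1_{t<γ} + (H(γ) + L')·1_{t≥γ}` for a pair `(F,H)` satisfying Condition M and a
random variable `L'` with `E(|L'|·1_{γ≤t}) < ∞` for all `t ∈ 𝒯` and `E[L'|γ] = 0`. -/
theorem stmt_9 (μ : Measure Ω) [IsProbabilityMeasure μ] (γ : Ω → ℝ≥0∞)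
    (hγ : Measurable γ) (hpos : 0 < μ {ω | 0 < γ ω})
    (M : ℝ≥0 → Ω → ℝ)
    (hrc : ∀ ω : Ω, ∀ t : ℝ≥0, ContinuousWithinAt (fun s => M s ω) (Ici t) t) :
    LocalMartingale μ γ M ↔
      ((∀ t : ℝ≥0, Measurable[jumpσ m γ t] (M t)) ∧
        ∃ F H : ℝ≥0 → ℝ, ∃ L' : Ω → ℝ,
          Measurable L' ∧
          CondM μ γ F H ∧
          (∀ t ∈ TT μ γ,
            Integrable (fun ω => ({ω' | γ ω' ≤ (t : ℝ≥0∞)}.indicator L') ω) μ) ∧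
          CondZeroGivenGamma μ γ L' ∧
          (∀ᵐ ω ∂μ, ∀ t : ℝ≥0,
            M t ω = if (t : ℝ≥0∞) < γ ω then F t else H (γ ω).toNNReal + L' ω)) := by
  constructor
  · intro hM
    obtain ⟨F, L, hL_meas, h_jump, hL, h_bal⟩ := hM.exists_isSingleJump hγ hrc
    obtain ⟨H, L', hH, hL'_meas, hL', h_zero, h_eq⟩ := hL.exists_eq_add_condZero hγ hL_meas
    have h_bal' := (balanced_add_condZero_iff ((memL1loc_iff hγ).1 hH).2 hL' h_zero).1
      (h_bal.congr_of_ne_top hγ h_eq)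
    exact ⟨hM.1, F, H, L', hL'_meas, (condM_iff hγ).2 ⟨hH, h_bal'⟩,
      (locIntegrable_iff_integrable_indicator hγ).1 hL', h_zero, h_jump.congr_of_ne_top h_eq⟩
  · rintro ⟨hM, F, H, L', -, h_condM, hL', h_zero, h_jump⟩
    obtain ⟨hH, h_bal⟩ := (condM_iff hγ).1 h_condM
    have hH_int := ((memL1loc_iff hγ).1 hH).2
    have hL'_int := (locIntegrable_iff_integrable_indicator hγ).2 hL'
    exact IsSingleJump.localMartingale h_jump hγ hM hrc
      (fun t ht => (hH_int t ht).add (hL'_int t ht))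
      ((balanced_add_condZero_iff hH_int hL'_int h_zero).2 h_bal)

end WithMeasurableSpace

end SingleJump
end
end

section
/- In Case A, assume P(γ = ∞) = 0, E|L′| < ∞, and ∫_{[0,t_G)} |H(s)| dG(s) < ∞. Then M has integrable total variation, E(Var(M)_∞) < ∞, if and only if ∫_{[0,t_G)} Ḡ(s)·|dF/dG(s)| dG(s) < ∞. -/
open MeasureTheory Filter Set Topology
open scoped ENNReal NNReal Classical

noncomputable section

namespace SingleJump

variable {Ω : Type*}

section WithMeasurableSpace

variable [m : MeasurableSpace Ω]

/-!
On the event `{γ ω = g}` the path of `M` is, before `g`, an indefinite integral of `z = dF/dG`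
against the law of `γ`, and it is constant from `g` on. Its variation is at least
`∫_(0,g) |z| dG`: approximate `z` in `L¹` by a continuous function, which is nearly constant on the
cells of a fine partition. Conversely, since the jump `|L - F(g-)|` is at most
`|L| + |F 0| + ∫_(0,g) |z| dG`, the variation is at most a constant times
`|F 0| + |L| + ∫_(0,g) |z| dG`, where `F 0` and `L` are integrable. Finally, Tonelli's theorem turns
`E ∫_(0,γ) |z| dG` into `∫_(0,t_G) Ḡ |z| dG`.
-/

section IntervalPartitions

lemma sum_setLIntegral_Ioc_succ {α : Type*} [LinearOrder α] [TopologicalSpace α]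
    [OrderClosedTopology α] [MeasurableSpace α] [OpensMeasurableSpace α] (ν : Measure α)
    (φ : α → ℝ≥0∞) {u : ℕ → α} (hu : Monotone u) (n : ℕ) :
    ∑ i ∈ Finset.range n, ∫⁻ x in Ioc (u i) (u (i + 1)), φ x ∂ν =
      ∫⁻ x in Ioc (u 0) (u n), φ x ∂ν := by
  induction n with
  | zero => simp
  | succ n ih =>
    rw [Finset.sum_range_succ, ih, ← lintegral_union measurableSet_Ioc
      (Ioc_disjoint_Ioc_of_le le_rfl), Ioc_union_Ioc_eq_Ioc (hu n.zero_le) (hu n.le_succ)]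

lemma exists_monotone_partition_edist_le {E : Type*} [PseudoEMetricSpace E] {h : ℝ≥0 → E}
    (hh : Continuous h) (t : ℝ≥0) {ε : ℝ≥0} (hε : 0 < ε) :
    ∃ (n : ℕ) (u : ℕ → ℝ≥0), Monotone u ∧ u 0 = 0 ∧ u n = t ∧
      ∀ i, ∀ x ∈ Icc (u i) (u (i + 1)), edist (h x) (h (u i)) ≤ ε := by
  let toNonneg : Icc (0 : ℝ) t → ℝ≥0 := fun x => ⟨x, x.2.1⟩
  have htoNonneg : Continuous toNonneg := continuous_subtype_val.subtype_mk _
  have hself (x) : edist (h (toNonneg x)) (h (toNonneg x)) < (ε / 2 : ℝ≥0∞) := by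
    simpa using hε.ne'
  obtain ⟨u, hu0, hu, ⟨n, hn⟩, hcell⟩ := exists_monotone_Icc_subset_open_cover_Icc t.2
    (c := fun x => {y | edist (h (toNonneg y)) (h (toNonneg x)) < ε / 2})
    (fun x => isOpen_lt (by fun_prop) continuous_const)
    (fun x _ => mem_iUnion.2 ⟨x, hself x⟩)
  refine ⟨n, fun i => toNonneg (u i), fun i j hij => hu hij, NNReal.eq hu0,
    NNReal.eq (hn n le_rfl), fun i x hx => ?_⟩
  obtain ⟨c, hc⟩ := hcell i
  have hleft := hc (left_mem_Icc.2 (hu i.le_succ))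
  have hright := hc (show (⟨x, x.2, hx.2.trans (u (i + 1)).2.2⟩ : Icc (0 : ℝ) t) ∈ _ from hx)
  calc edist (h x) (h (toNonneg (u i)))
      ≤ edist (h x) (h (toNonneg c)) + edist (h (toNonneg (u i))) (h (toNonneg c)) :=
        edist_triangle_right _ _ _
    _ ≤ ε / 2 + ε / 2 := add_le_add hright.le hleft.le
    _ = ε := ENNReal.add_halves _

end IntervalPartitions

section PathVariation

variable {E : Type*} [NormedAddCommGroup E] [NormedSpace ℝ E]

lemma setLIntegral_enorm_le_enorm_setIntegral_add [CompleteSpace E] {α : Type*}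
    [MeasurableSpace α] {ν : Measure α} {w : α → E} {s : Set α} (hs : ν s ≠ ⊤)
    (hw : IntegrableOn w s ν) (c : E) :
    ∫⁻ x in s, ‖w x‖ₑ ∂ν ≤ ‖∫ x in s, w x ∂ν‖ₑ + 2 * ∫⁻ x in s, ‖w x - c‖ₑ ∂ν := by
  have hconst : IntegrableOn (fun _ => c) s ν := integrableOn_const hs
  have hc : ‖c‖ₑ * ν s ≤ ‖∫ x in s, w x ∂ν‖ₑ + ∫⁻ x in s, ‖w x - c‖ₑ ∂ν := by
    calc ‖c‖ₑ * ν s = ‖∫ _ in s, c ∂ν‖ₑ := by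
          rw [setIntegral_const, enorm_smul, Real.enorm_of_nonneg measureReal_nonneg,
            ofReal_measureReal hs, mul_comm]
      _ = ‖∫ x in s, w x ∂ν - ∫ x in s, (w x - c) ∂ν‖ₑ := by
          rw [integral_sub hw hconst, sub_sub_cancel]
      _ ≤ _ := enorm_sub_le.trans (by gcongr; exact enorm_integral_le_lintegral_enorm _)
  calc ∫⁻ x in s, ‖w x‖ₑ ∂ν
      ≤ ∫⁻ x in s, (‖w x - c‖ₑ + ‖c‖ₑ) ∂ν :=
        lintegral_mono fun x => by simpa using enorm_add_le (w x - c) c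
    _ = ∫⁻ x in s, ‖w x - c‖ₑ ∂ν + ‖c‖ₑ * ν s := by
        rw [lintegral_add_right _ measurable_const, setLIntegral_const]
    _ ≤ _ := by
        grw [hc]
        exact le_of_eq (by ring)

lemma eVariationOn_le_measure_univ {α β X : Type*} [LinearOrder α] [LinearOrder β]
    [TopologicalSpace β] [OrderClosedTopology β] [MeasurableSpace β] [OpensMeasurableSpace β]
    [PseudoEMetricSpace X] {f : α → X} {φ : α → β} (hφ : Monotone φ) (ρ : Measure β)
    (h : ∀ s t, s ≤ t → edist (f t) (f s) ≤ ρ (Ioc (φ s) (φ t))) :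
    eVariationOn f univ ≤ ρ univ := by
  refine iSup_le fun ⟨n, u, hu, _⟩ => ?_
  calc ∑ i ∈ Finset.range n, edist (f (u (i + 1))) (f (u i))
      ≤ ∑ i ∈ Finset.range n, ρ (Ioc (φ (u i)) (φ (u (i + 1)))) :=
        Finset.sum_le_sum fun i _ => h _ _ (hu i.le_succ)
    _ ≤ ρ univ := sum_measure_le_measure_univ (fun _ _ => measurableSet_Ioc.nullMeasurableSet)
        fun _ _ _ _ hij => ((hφ.comp hu).pairwise_disjoint_on_Ioc_succ hij).aedisjoint

/-- The path `f` is, strictly before the time `g`, an indefinite integral of `w` with respect to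
`ν`. Times are finite, but `ν` lives on `[0, ∞]`, like the law of a jump time. -/
structure HasDensityBefore (ν : Measure ℝ≥0∞) (w : ℝ≥0∞ → E) (g : ℝ≥0∞) (f : ℝ≥0 → E) :
    Prop where
  integrableOn : ∀ t : ℝ≥0, (t : ℝ≥0∞) < g → IntegrableOn w (Ioc 0 (t : ℝ≥0∞)) ν
  sub_eq : ∀ a b : ℝ≥0, a ≤ b → (b : ℝ≥0∞) < g →
    f b - f a = ∫ x in Ioc (a : ℝ≥0∞) b, w x ∂ν

namespace HasDensityBefore

variable {ν : Measure ℝ≥0∞} {w : ℝ≥0∞ → E} {g g' : ℝ≥0∞} {f f' : ℝ≥0 → E} {t : ℝ≥0}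

lemma mono_congr (hf : HasDensityBefore ν w g f) (hg : g' ≤ g)
    (hff' : ∀ t : ℝ≥0, (t : ℝ≥0∞) < g' → f' t = f t) : HasDensityBefore ν w g' f' where
  integrableOn t ht := hf.integrableOn t (ht.trans_le hg)
  sub_eq a b hab hb := by
    rw [hff' b hb, hff' a ((ENNReal.coe_le_coe.2 hab).trans_lt hb),
      hf.sub_eq a b hab (hb.trans_le hg)]

lemma edist_le (hf : HasDensityBefore ν w g f) {a b : ℝ≥0} (hab : a ≤ b)
    (hb : (b : ℝ≥0∞) < g) :
    edist (f b) (f a) ≤ ∫⁻ x in Ioc (a : ℝ≥0∞) b, ‖w x‖ₑ ∂ν := by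
  rw [edist_eq_enorm_sub, hf.sub_eq a b hab hb]
  exact enorm_integral_le_lintegral_enorm _

lemma setLIntegral_enorm_le_edist_add [CompleteSpace E] [IsFiniteMeasure ν]
    (hf : HasDensityBefore ν w g f) {a b : ℝ≥0} (hab : a ≤ b) (hb : (b : ℝ≥0∞) < g) (c : E) :
    ∫⁻ x in Ioc (a : ℝ≥0∞) b, ‖w x‖ₑ ∂ν ≤
      edist (f b) (f a) + 2 * ∫⁻ x in Ioc (a : ℝ≥0∞) b, ‖w x - c‖ₑ ∂ν := by
  rw [edist_eq_enorm_sub, hf.sub_eq a b hab hb]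
  exact setLIntegral_enorm_le_enorm_setIntegral_add (measure_ne_top _ _)
    ((hf.integrableOn b hb).mono_set (Ioc_subset_Ioc_left zero_le)) c

lemma setLIntegral_enorm_le_eVariationOn_add [CompleteSpace E] [IsFiniteMeasure ν]
    (hf : HasDensityBefore ν w g f) (ht : (t : ℝ≥0∞) < g) {h : ℝ≥0∞ → E} (hh : Continuous h)
    {ε : ℝ≥0} (hε : 0 < ε) :
    ∫⁻ x in Ioc 0 (t : ℝ≥0∞), ‖w x‖ₑ ∂ν ≤
      eVariationOn f univ + 2 * ∫⁻ x in Ioc 0 (t : ℝ≥0∞), (‖w x - h x‖ₑ + ε) ∂ν := by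
  obtain ⟨n, u, hu, hu0, hun, hosc⟩ :=
    exists_monotone_partition_edist_le (hh.comp ENNReal.continuous_coe) t hε
  have hsum (φ : ℝ≥0∞ → ℝ≥0∞) :
      ∑ i ∈ Finset.range n, ∫⁻ x in Ioc (u i : ℝ≥0∞) (u (i + 1)), φ x ∂ν =
        ∫⁻ x in Ioc 0 (t : ℝ≥0∞), φ x ∂ν := by
    simpa [hu0, hun] using
      sum_setLIntegral_Ioc_succ ν φ (u := fun i => (u i : ℝ≥0∞)) (ENNReal.coe_mono.comp hu) n
  have happrox (i : ℕ) (x : ℝ≥0∞) (hx : x ∈ Ioc (u i : ℝ≥0∞) (u (i + 1))) :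
      ‖w x - h (u i)‖ₑ ≤ ‖w x - h x‖ₑ + ε := by
    lift x to ℝ≥0 using ne_top_of_le_ne_top ENNReal.coe_ne_top hx.2
    have hx' : x ∈ Icc (u i) (u (i + 1)) :=
      ⟨(ENNReal.coe_lt_coe.1 hx.1).le, ENNReal.coe_le_coe.1 hx.2⟩
    simp only [← edist_eq_enorm_sub]
    exact (edist_triangle _ _ _).trans (by gcongr; exact hosc i x hx')
  have hcell (i : ℕ) (hi : i ∈ Finset.range n) :
      ∫⁻ x in Ioc (u i : ℝ≥0∞) (u (i + 1)), ‖w x‖ₑ ∂ν ≤ edist (f (u (i + 1))) (f (u i)) +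
        2 * ∫⁻ x in Ioc (u i : ℝ≥0∞) (u (i + 1)), (‖w x - h x‖ₑ + ε) ∂ν := by
    have hlt : (u (i + 1) : ℝ≥0∞) < g :=
      (ENNReal.coe_le_coe.2 (hun ▸ hu (Finset.mem_range.1 hi))).trans_lt ht
    refine (hf.setLIntegral_enorm_le_edist_add (hu i.le_succ) hlt (h (u i))).trans ?_
    gcongr _ + 2 * ?_
    exact setLIntegral_mono' measurableSet_Ioc (happrox i)
  calc ∫⁻ x in Ioc 0 (t : ℝ≥0∞), ‖w x‖ₑ ∂ν
      ≤ ∑ i ∈ Finset.range n, (edist (f (u (i + 1))) (f (u i)) +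
          2 * ∫⁻ x in Ioc (u i : ℝ≥0∞) (u (i + 1)), (‖w x - h x‖ₑ + ε) ∂ν) :=
        (hsum _).symm.trans_le (Finset.sum_le_sum hcell)
    _ = ∑ i ∈ Finset.range n, edist (f (u (i + 1))) (f (u i)) +
          2 * ∫⁻ x in Ioc 0 (t : ℝ≥0∞), (‖w x - h x‖ₑ + ε) ∂ν := by
        rw [Finset.sum_add_distrib, ← Finset.mul_sum, hsum]
    _ ≤ _ := by
        gcongr
        exact eVariationOn.sum_le hu fun _ => mem_univ _

lemma setLIntegral_Ioc_enorm_le_eVariationOn [CompleteSpace E] [IsFiniteMeasure ν]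
    (hf : HasDensityBefore ν w g f) (ht : (t : ℝ≥0∞) < g) :
    ∫⁻ x in Ioc 0 (t : ℝ≥0∞), ‖w x‖ₑ ∂ν ≤ eVariationOn f univ := by
  have happrox (ε : ℝ≥0) (hε : 0 < ε) : ∫⁻ x in Ioc 0 (t : ℝ≥0∞), ‖w x‖ₑ ∂ν ≤
      eVariationOn f univ + ε * (2 * (1 + ν univ)) := by
    obtain ⟨h, hh, -⟩ := (hf.integrableOn t ht).exists_boundedContinuous_lintegral_sub_le
      (ENNReal.coe_ne_zero.2 hε.ne')
    calc ∫⁻ x in Ioc 0 (t : ℝ≥0∞), ‖w x‖ₑ ∂ν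
        ≤ eVariationOn f univ + 2 * ∫⁻ x in Ioc 0 (t : ℝ≥0∞), (‖w x - h x‖ₑ + ε) ∂ν :=
          hf.setLIntegral_enorm_le_eVariationOn_add ht h.continuous hε
      _ ≤ eVariationOn f univ + 2 * (ε + ε * ν univ) := by
          rw [lintegral_add_right _ measurable_const, setLIntegral_const]
          gcongr
          exact subset_univ _
      _ = _ := by ring
  have hlim : Tendsto (fun ε : ℝ≥0 => eVariationOn f univ + ε * (2 * (1 + ν univ)))
      (𝓝[>] 0) (𝓝 (eVariationOn f univ)) := by
    have hcont := ((ENNReal.continuous_mul_const (a := 2 * (1 + ν univ)) (by finiteness)).comp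
      ENNReal.continuous_coe).const_add (eVariationOn f univ)
    simpa using (hcont.tendsto 0).mono_left nhdsWithin_le_nhds
  exact ge_of_tendsto hlim (eventually_nhdsWithin_of_forall happrox)

lemma setLIntegral_Ioo_enorm_le_eVariationOn [CompleteSpace E] [IsFiniteMeasure ν]
    (hf : HasDensityBefore ν w g f) :
    ∫⁻ x in Ioo 0 g, ‖w x‖ₑ ∂ν ≤ eVariationOn f univ := by
  rcases eq_zero_or_pos g with rfl | hg
  · simp
  obtain ⟨u, hu, hlt, hlim⟩ := exists_seq_strictMono_tendsto' hg
  have hIoo : Ioo 0 g = ⋃ n, Ioc 0 (u n) := by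
    refine Subset.antisymm (fun x hx => ?_)
      (iUnion_subset fun n => Ioc_subset_Ioo_right (hlt n).2)
    obtain ⟨n, hn⟩ := (hlim.eventually (lt_mem_nhds hx.2)).exists
    exact mem_iUnion.2 ⟨n, hx.1, hn.le⟩
  rw [hIoo, setLIntegral_iUnion_of_directed _
    (Monotone.directed_le fun m n hmn => Ioc_subset_Ioc_right (hu.monotone hmn))]
  refine iSup_le fun n => ?_
  have hn := (hlt n).2
  lift u n to ℝ≥0 using hn.ne_top with t
  exact hf.setLIntegral_Ioc_enorm_le_eVariationOn hn

-- The jump at `g` is charged to a Dirac mass dominating every `edist l (f s)` with `s < g`.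
lemma eVariationOn_le_of_const_after (hf : HasDensityBefore ν w g f) {l : E}
    (hl : ∀ t : ℝ≥0, g ≤ t → f t = l) :
    eVariationOn f univ ≤ edist l (f 0) + 2 * ∫⁻ x in Ioo 0 g, ‖w x‖ₑ ∂ν := by
  set I := ∫⁻ x in Ioo 0 g, ‖w x‖ₑ ∂ν with hI
  let ρ := (ν.restrict (Ioo 0 g)).withDensity (fun x => ‖w x‖ₑ) +
    (edist l (f 0) + I) • Measure.dirac g
  have hρ : ∀ s t : ℝ≥0, s ≤ t → edist (f t) (f s) ≤ ρ (Ioc (s : ℝ≥0∞) t) := by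
    intro s t hst
    rcases lt_or_ge (t : ℝ≥0∞) g with ht | ht
    · have hsub : Ioc (s : ℝ≥0∞) t ⊆ Ioo 0 g := Ioc_subset_Ioo_right ht |>.trans
        (Ioo_subset_Ioo_left zero_le)
      calc edist (f t) (f s) ≤ ∫⁻ x in Ioc (s : ℝ≥0∞) t, ‖w x‖ₑ ∂ν := hf.edist_le hst ht
        _ = (ν.restrict (Ioo 0 g)).withDensity (fun x => ‖w x‖ₑ) (Ioc (s : ℝ≥0∞) t) := by
          rw [withDensity_apply _ measurableSet_Ioc, Measure.restrict_restrict measurableSet_Ioc,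
            inter_eq_left.2 hsub]
        _ ≤ ρ (Ioc (s : ℝ≥0∞) t) := Measure.le_add_right le_rfl _
    rcases lt_or_ge (s : ℝ≥0∞) g with hs | hs
    · calc edist (f t) (f s) ≤ edist l (f 0) + edist (f s) (f 0) := by
            rw [hl t ht]; exact edist_triangle_right _ _ _
        _ ≤ edist l (f 0) + I := by
            gcongr
            exact (hf.edist_le zero_le hs).trans
              (lintegral_mono_set (by simpa using Ioc_subset_Ioo_right hs))
        _ = ((edist l (f 0) + I) • Measure.dirac g) (Ioc (s : ℝ≥0∞) t) := by
            simp [hs, ht]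
        _ ≤ ρ (Ioc (s : ℝ≥0∞) t) := Measure.le_add_left le_rfl _
    · simp [hl t ht, hl s hs]
  calc eVariationOn f univ ≤ ρ univ := eVariationOn_le_measure_univ ENNReal.coe_mono ρ hρ
    _ = I + (edist l (f 0) + I) := by simp [ρ, ← hI]
    _ = _ := by ring

lemma totalVar_le_of_eq_ite {w : ℝ≥0∞ → ℝ} {f F : ℝ≥0 → ℝ} {l : ℝ}
    (hf : HasDensityBefore ν w g f)
    (hfF : ∀ t : ℝ≥0, f t = if (t : ℝ≥0∞) < g then F t else l) :
    totalVar f ≤ 3 * (‖F 0‖ₑ + (‖l‖ₑ + ∫⁻ x in Ioo 0 g, ‖w x‖ₑ ∂ν)) := by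
  set I := ∫⁻ x in Ioo 0 g, ‖w x‖ₑ ∂ν
  have hafter (t : ℝ≥0) (ht : g ≤ t) : f t = l := by rw [hfF t, if_neg ht.not_gt]
  have hinit : ‖f 0‖ₑ ≤ ‖F 0‖ₑ + ‖l‖ₑ := by
    rw [hfF 0]
    split_ifs
    exacts [le_self_add, le_add_self]
  calc totalVar f ≤ ‖f 0‖ₑ + (edist l (f 0) + 2 * I) :=
        add_le_add_right (hf.eVariationOn_le_of_const_after hafter) _
    _ ≤ ‖f 0‖ₑ + (‖l‖ₑ + ‖f 0‖ₑ + 2 * I) := by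
        gcongr
        exact edist_eq_enorm_sub l (f 0) ▸ enorm_sub_le
    _ ≤ ‖F 0‖ₑ + ‖l‖ₑ + (‖l‖ₑ + (‖F 0‖ₑ + ‖l‖ₑ) + 2 * I) := by gcongr
    _ ≤ ‖F 0‖ₑ + ‖l‖ₑ + (‖l‖ₑ + (‖F 0‖ₑ + ‖l‖ₑ) + 2 * I) + (‖F 0‖ₑ + I) := le_self_add
    _ = 3 * (‖F 0‖ₑ + (‖l‖ₑ + I)) := by ring

end HasDensityBefore

end PathVariation

lemma lintegral_setLIntegral_inter_Iio {α : Type*} [LinearOrder α] [TopologicalSpace α]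
    [OrderClosedTopology α] [SecondCountableTopology α] [MeasurableSpace α]
    [OpensMeasurableSpace α] (μ : Measure Ω) [SFinite μ] (ν : Measure α) [SFinite ν] {γ : Ω → α}
    (hγ : Measurable γ) {φ : α → ℝ≥0∞} (hφ : Measurable φ) (s : Set α) :
    ∫⁻ ω, ∫⁻ x in s ∩ Iio (γ ω), φ x ∂ν ∂μ = ∫⁻ x in s, φ x * μ {ω | x < γ ω} ∂ν := by
  have hmeas : MeasurableSet {p : Ω × α | p.2 < γ p.1} :=
    measurableSet_lt measurable_snd (hγ.comp measurable_fst)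
  calc ∫⁻ ω, ∫⁻ x in s ∩ Iio (γ ω), φ x ∂ν ∂μ
      = ∫⁻ ω, ∫⁻ x in s, {p : Ω × α | p.2 < γ p.1}.indicator (fun p => φ p.2) (ω, x) ∂ν ∂μ := by
        refine lintegral_congr fun ω => ?_
        rw [inter_comm, ← Measure.restrict_restrict measurableSet_Iio,
          ← lintegral_indicator measurableSet_Iio]
        rfl
    _ = ∫⁻ x in s, ∫⁻ ω, {ω | x < γ ω}.indicator (fun _ => φ x) ω ∂μ ∂ν :=
        lintegral_lintegral_swap ((hφ.comp measurable_snd).indicator hmeas).aemeasurable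
    _ = ∫⁻ x in s, φ x * μ {ω | x < γ ω} ∂ν :=
        lintegral_congr fun x =>
          lintegral_indicator_const (measurableSet_lt measurable_const hγ) _

section JumpTime

variable {μ : Measure Ω} {γ : Ω → ℝ≥0∞}

lemma measurable_Gbar [IsFiniteMeasure μ] : Measurable (Gbar μ γ) :=
  Antitone.measurable fun _ _ hst => measureReal_mono fun _ hω =>
    (ENNReal.coe_le_coe.2 hst).trans_lt hω

variable [IsProbabilityMeasure μ]

lemma ae_le_tG (hγ : Measurable γ) : ∀ᵐ ω ∂μ, γ ω ≤ tG μ γ := by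
  have hle (t : ℝ≥0) (ht : tG μ γ < t) : ∀ᵐ ω ∂μ, γ ω ≤ t := by
    have hnot : ¬ μ {ω | γ ω ≤ (t : ℝ≥0∞)} < 1 := fun h =>
      ht.not_ge (le_sSup (mem_image_of_mem _ h))
    exact (mem_ae_iff_prob_eq_one (measurableSet_le hγ measurable_const)).2
      (prob_le_one.antisymm (not_lt.1 hnot))
  rcases eq_or_ne (tG μ γ) ⊤ with htop | htop
  · simp [htop]
  obtain ⟨u, -, hu, hlim⟩ := exists_seq_strictAnti_tendsto (tG μ γ).toNNReal
  have hall : ∀ᵐ ω ∂μ, ∀ n, γ ω ≤ u n :=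
    ae_all_iff.2 fun n => hle _ (ENNReal.coe_toNNReal htop ▸ ENNReal.coe_lt_coe.2 (hu n))
  filter_upwards [hall] with ω hω
  rw [← ENNReal.coe_toNNReal htop]
  exact ge_of_tendsto' (ENNReal.tendsto_coe.2 hlim) hω

lemma ae_lt_tG (hγ : Measurable γ) (hA : CaseA μ γ) (hfin : μ {ω | γ ω = ⊤} = 0) :
    ∀ᵐ ω ∂μ, γ ω < tG μ γ := by
  filter_upwards [ae_le_tG hγ, measure_eq_zero_iff_ae_notMem.1 hA,
    measure_eq_zero_iff_ae_notMem.1 hfin] with ω hle hne hω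
  refine hle.lt_of_ne fun heq => hne ⟨heq, ?_⟩
  exact heq ▸ lt_top_iff_ne_top.2 hω

lemma mem_TT_of_lt_tG (hγ : Measurable γ) {t : ℝ≥0} (ht : (t : ℝ≥0∞) < tG μ γ) :
    t ∈ TT μ γ := by
  obtain ⟨_, ⟨s, hs, rfl⟩, hts⟩ := lt_sSup_iff.1 ht
  have hpos : 0 < μ {ω | γ ω ≤ (s : ℝ≥0∞)}ᶜ := by
    rw [prob_compl_eq_one_sub (measurableSet_le hγ measurable_const)]
    exact tsub_pos_of_lt hs
  exact hpos.trans_le (measure_mono fun ω hω => (hts.trans (not_le.1 hω)).le)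

lemma LocAC.hasDensityBefore {F z : ℝ≥0 → ℝ} (hγ : Measurable γ) (hF : LocAC μ γ F z) :
    HasDensityBefore (μ.map γ) (fun x => z x.toNNReal) (tG μ γ) F := by
  have hint (t : ℝ≥0) (ht : (t : ℝ≥0∞) < tG μ γ) :
      IntegrableOn (fun x => z x.toNNReal) (Ioc 0 (t : ℝ≥0∞)) (μ.map γ) :=
    (hF.1.2 t (mem_TT_of_lt_tG hγ ht)).mono_set Ioc_subset_Icc_self
  refine ⟨hint, fun a b hab hb => ?_⟩
  have hab' : (a : ℝ≥0∞) ≤ b := ENNReal.coe_le_coe.2 hab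
  have ha := hab'.trans_lt hb
  rw [hF.2 b hb, hF.2 a ha, ← Ioc_union_Ioc_eq_Ioc zero_le hab',
    setIntegral_union (Ioc_disjoint_Ioc_of_le le_rfl) measurableSet_Ioc (hint a ha)
      ((hint b hb).mono_set (Ioc_subset_Ioc_left zero_le))]
  ring

lemma integrableOn_Gbar_mul_iff (hγ : Measurable γ) {z : ℝ≥0 → ℝ} (hz : Measurable z) :
    IntegrableOn (fun x : ℝ≥0∞ => Gbar μ γ x.toNNReal * z x.toNNReal)
        (Ioo 0 (tG μ γ)) (μ.map γ) ↔
      ∫⁻ ω, ∫⁻ x in Ioo 0 (γ ω), ‖z x.toNNReal‖ₑ ∂(μ.map γ) ∂μ < ⊤ := by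
  have hmeas : Measurable fun x : ℝ≥0∞ => Gbar μ γ x.toNNReal * z x.toNNReal :=
    (measurable_Gbar.mul hz).comp ENNReal.measurable_toNNReal
  have hnorm : Measurable fun x : ℝ≥0∞ => ‖z x.toNNReal‖ₑ :=
    (hz.comp ENNReal.measurable_toNNReal).enorm
  have : IsProbabilityMeasure (μ.map γ) := Measure.isProbabilityMeasure_map hγ.aemeasurable
  have hGbar (x : ℝ≥0∞) (hx : x ∈ Ioo 0 (tG μ γ)) :
      ‖Gbar μ γ x.toNNReal * z x.toNNReal‖ₑ = ‖z x.toNNReal‖ₑ * μ {ω | x < γ ω} := by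
    rw [enorm_mul, mul_comm, Gbar, ENNReal.coe_toNNReal hx.2.ne_top,
      Real.enorm_of_nonneg ENNReal.toReal_nonneg, ENNReal.ofReal_toReal (measure_ne_top _ _)]
  rw [IntegrableOn, Integrable, and_iff_right hmeas.aestronglyMeasurable,
    hasFiniteIntegral_iff_enorm, setLIntegral_congr_fun measurableSet_Ioo hGbar,
    ← lintegral_setLIntegral_inter_Iio μ _ hγ hnorm]
  refine Iff.of_eq (congrArg (· < ⊤) (lintegral_congr_ae ?_))
  filter_upwards [ae_le_tG hγ] with ω hω
  rw [Ioo_inter_Iio, min_eq_right hω]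

lemma integrable_comp_of_integrableOn_Iio_tG (hγ : Measurable γ) (hA : CaseA μ γ)
    (hfin : μ {ω | γ ω = ⊤} = 0) {E : Type*} [NormedAddCommGroup E] {φ : ℝ≥0∞ → E}
    (hφ : IntegrableOn φ (Iio (tG μ γ)) (μ.map γ)) : Integrable (fun ω => φ (γ ω)) μ := by
  have hae : ∀ᵐ x ∂(μ.map γ), x ∈ Iio (tG μ γ) :=
    (ae_map_iff hγ.aemeasurable measurableSet_Iio).2 (ae_lt_tG hγ hA hfin)
  rw [IntegrableOn, Measure.restrict_eq_self_of_ae_mem hae] at hφ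
  exact hφ.comp_measurable hγ

theorem stmt_16_general (hγ : Measurable γ) {M : ℝ≥0 → Ω → ℝ} {F z : ℝ≥0 → ℝ} {L : Ω → ℝ}
    (hF : LocAC μ γ F z) (hL : Integrable L μ)
    (hrepr : ∀ᵐ ω ∂μ, ∀ t : ℝ≥0, M t ω = if (t : ℝ≥0∞) < γ ω then F t else L ω) :
    ∫⁻ ω, totalVar (fun t => M t ω) ∂μ < ⊤ ↔
      IntegrableOn (fun x : ℝ≥0∞ => Gbar μ γ x.toNNReal * z x.toNNReal)
        (Ioo 0 (tG μ γ)) (μ.map γ) := by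
  have : IsProbabilityMeasure (μ.map γ) := Measure.isProbabilityMeasure_map hγ.aemeasurable
  have hpath : ∀ᵐ ω ∂μ,
      HasDensityBefore (μ.map γ) (fun x => z x.toNNReal) (γ ω) fun t => M t ω := by
    filter_upwards [ae_le_tG hγ, hrepr] with ω hle hω
    exact (hF.hasDensityBefore hγ).mono_congr hle fun t ht => by rw [hω, if_pos ht]
  rw [integrableOn_Gbar_mul_iff hγ hF.1.1]
  constructor <;> intro hfinite
  · refine (lintegral_mono_ae ?_).trans_lt hfinite
    filter_upwards [hpath] with ω hω
    exact hω.setLIntegral_Ioo_enorm_le_eVariationOn.trans le_add_self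
  have hbound : ∀ᵐ ω ∂μ, totalVar (fun t => M t ω) ≤
      3 * (‖F 0‖ₑ + (‖L ω‖ₑ + ∫⁻ x in Ioo 0 (γ ω), ‖z x.toNNReal‖ₑ ∂(μ.map γ))) := by
    filter_upwards [hpath, hrepr] with ω hω hMω using hω.totalVar_le_of_eq_ite hMω
  refine (lintegral_mono_ae hbound).trans_lt ?_
  rw [lintegral_const_mul' _ _ (by simp), lintegral_add_left measurable_const,
    lintegral_add_left' hL.1.enorm, lintegral_const]
  exact ENNReal.mul_lt_top (by simp) (ENNReal.add_lt_top.2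
    ⟨by simp, ENNReal.add_lt_top.2 ⟨hasFiniteIntegral_iff_enorm.1 hL.2, hfinite⟩⟩)

end JumpTime

/-- **Theorem 5 (iii.iii), Case A.** Assume `P(γ = ∞) = 0`, `E|L'| < ∞` and
`∫_{[0,t_G)} |H| dG < ∞`. Then `M` has integrable total variation iff
`∫_{[0,t_G)} Ḡ(s)|dF/dG(s)| dG(s) < ∞`. -/
theorem stmt_16
(μ : Measure Ω) [IsProbabilityMeasure μ] (γ : Ω → ℝ≥0∞)
    (hγ : Measurable γ) (hpos : 0 < μ {ω | 0 < γ ω})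
    (M : ℝ≥0 → Ω → ℝ) (F H : ℝ≥0 → ℝ) (L' : Ω → ℝ)
    (hM : LocalMartingale μ γ M)
    (hFH : CondM μ γ F H)
    (hL'meas : Measurable L')
    (hL'int : ∀ t ∈ TT μ γ,
      Integrable (fun ω => ({ω' | γ ω' ≤ (t : ℝ≥0∞)}.indicator L') ω) μ)
    (hL'cond : CondZeroGivenGamma μ γ L')
    (hrepr : ∀ᵐ ω ∂μ, ∀ t : ℝ≥0,
      M t ω = if (t : ℝ≥0∞) < γ ω then F t else H (γ ω).toNNReal + L' ω)
    (hA : CaseA μ γ)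
    (hfin : μ {ω | γ ω = ⊤} = 0)
    (hL'fin : Integrable L' μ)
    (hHfin : IntegrableOn (fun x : ℝ≥0∞ => H x.toNNReal) (Iio (tG μ γ)) (μ.map γ)) :
    (∫⁻ ω, totalVar (fun t => M t ω) ∂μ < ⊤) ↔
      (∀ z : ℝ≥0 → ℝ, LocAC μ γ F z →
        IntegrableOn (fun x : ℝ≥0∞ => Gbar μ γ x.toNNReal * z x.toNNReal)
          (Ioo 0 (tG μ γ)) (μ.map γ)) := by
  have hL : Integrable (fun ω => H (γ ω).toNNReal + L' ω) μ :=
    (integrable_comp_of_integrableOn_Iio_tG hγ hA hfin hHfin).add hL'fin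
  obtain ⟨z₀, hz₀⟩ := hFH.1
  exact ⟨fun hvar z hz => (stmt_16_general hγ hz hL hrepr).1 hvar,
    fun hint => (stmt_16_general hγ hz₀ hL hrepr).2 (hint z₀ hz₀)⟩

end WithMeasurableSpace

end SingleJump
end
end
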